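/- arXiv:2309.15398 — 2 statements merged into one kernel-verified Lean document; each statement's English description precedes it below -/
import Mathlib

section
/- Suppose K ≠ ∅ and Ideal(c_eq)+QM(c_in) is archimedean. If the LICQC, SCC and SOSC hold at every global minimizer of the polynomial optimization problem (POP): minimize f(x) subject to x ∈ K, then there exists k1 ∈ ℕ such that for every k ≥ k1, every minimizer of the kth moment relaxation of (POP) has a flat truncation. -/
open MvPolynomial MeasureTheory

noncomputable section

/-- The space of real polynomials in `n` variables. -/
abbrev RPoly (n : ℕ) : Type := MvPolynomial (Fin n) ℝ

/-- The degree `|α|` of a monomial power `α`. -/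
def mdeg {n : ℕ} (α : Fin n →₀ ℕ) : ℕ := ∑ i, α i

/-- `p` is a sum of squares of polynomials. -/
def IsSOS {n : ℕ} (p : RPoly n) : Prop :=
  ∃ L : List (RPoly n), p = (L.map (fun q => q ^ 2)).sum

/-- The truncation `QM(g)_k` of the quadratic module generated by `(g j)_{j ∈ S}`. -/
def QModDeg {n : ℕ} {κ : Type} (S : Finset κ) (g : κ → RPoly n) (k : ℕ) :
    Set (RPoly n) :=
  {p | ∃ σ0 : RPoly n, ∃ σ : κ → RPoly n,
      IsSOS σ0 ∧ σ0.totalDegree ≤ k ∧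
      (∀ j ∈ S, IsSOS (σ j) ∧ (σ j).totalDegree + (g j).totalDegree ≤ k) ∧
      p = σ0 + ∑ j ∈ S, g j * σ j}

/-- The truncation `Ideal(h)_k` of the ideal generated by `(h j)_{j ∈ S}`. -/
def IdealDeg {n : ℕ} {ι : Type} (S : Finset ι) (h : ι → RPoly n) (k : ℕ) :
    Set (RPoly n) :=
  {p | ∃ q : ι → RPoly n,
      (∀ j ∈ S, (q j).totalDegree + (h j).totalDegree ≤ k) ∧
      p = ∑ j ∈ S, h j * q j}

/-- The quadratic module `QM(g)` generated by `(g j)_{j ∈ S}`. -/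
def QModFull {n : ℕ} {κ : Type} (S : Finset κ) (g : κ → RPoly n) : Set (RPoly n) :=
  {p | ∃ σ0 : RPoly n, ∃ σ : κ → RPoly n,
      IsSOS σ0 ∧ (∀ j ∈ S, IsSOS (σ j)) ∧ p = σ0 + ∑ j ∈ S, g j * σ j}

/-- The ideal `Ideal(h)` generated by `(h j)_{j ∈ S}`. -/
def IdealFull {n : ℕ} {ι : Type} (S : Finset ι) (h : ι → RPoly n) : Set (RPoly n) :=
  (Ideal.span (h '' (S : Set ι)) : Ideal (RPoly n))

/-- `Ideal(c_eq) + QM(c_in)` is archimedean. -/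
def ArchimedeanQM {n : ℕ} (E I : Finset ℕ) (c : ℕ → RPoly n) : Prop :=
  ∃ R : ℝ, 0 < R ∧ ∃ p1 ∈ IdealFull E c, ∃ p2 ∈ QModFull I c,
    (C R : RPoly n) - ∑ i, (X i : RPoly n) ^ 2 = p1 + p2

/-- The basic closed semialgebraic set `K`. -/
def Kset {n : ℕ} (E I : Finset ℕ) (c : ℕ → RPoly n) : Set (Fin n → ℝ) :=
  {x | (∀ j ∈ E, eval x (c j) = 0) ∧ (∀ j ∈ I, 0 ≤ eval x (c j))}

/-- The bilinear pairing `⟨p, y⟩ = ∑_α p_α y_α`. -/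
def pairing {n : ℕ} (p : RPoly n) (y : (Fin n →₀ ℕ) → ℝ) : ℝ :=
  ∑ α ∈ p.support, p.coeff α * y α

/-- Membership in the moment cone `ℛ_d(K)`: the entries `y_α`, `|α| ≤ d`, are the
moments of a finite Borel measure supported in the closed set `K`. -/
def InMomentCone {n : ℕ} (d : ℕ) (K : Set (Fin n → ℝ)) (y : (Fin n →₀ ℕ) → ℝ) : Prop :=
  ∃ μ : Measure (Fin n → ℝ), IsFiniteMeasure μ ∧ μ Kᶜ = 0 ∧
    ∀ α : Fin n →₀ ℕ, mdeg α ≤ d →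
      Integrable (fun x => ∏ i, x i ^ α i) μ ∧
      y α = ∫ x, (∏ i, x i ^ α i) ∂μ

/-- The cone `P_d(K)` of polynomials of degree at most `d` that are nonnegative on `K`. -/
def PdCone {n : ℕ} (d : ℕ) (K : Set (Fin n → ℝ)) : Set (RPoly n) :=
  {p | p.totalDegree ≤ d ∧ ∀ x ∈ K, 0 ≤ eval x p}

/-- The interior of `P_d(K)` in the coefficient topology of `ℝ[x]_d`. -/
def PdInterior {n : ℕ} (d : ℕ) (K : Set (Fin n → ℝ)) : Set (RPoly n) :=
  {p | p.totalDegree ≤ d ∧ ∃ ε : ℝ, 0 < ε ∧ ∀ q : RPoly n, q.totalDegree ≤ d →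
      (∀ α : Fin n →₀ ℕ, |q.coeff α - p.coeff α| ≤ ε) → ∀ x ∈ K, 0 ≤ eval x q}

instance degLEFintype (n t : ℕ) : Fintype {α : Fin n →₀ ℕ // mdeg α ≤ t} := by
  apply Fintype.ofInjective
    (fun a : {α : Fin n →₀ ℕ // mdeg α ≤ t} =>
      (fun i => (⟨a.1 i, by
        have h1 : a.1 i ≤ mdeg a.1 :=
          Finset.single_le_sum (fun j _ => Nat.zero_le _) (Finset.mem_univ i)
        exact Nat.lt_succ_of_le (le_trans h1 a.2)⟩ : Fin (t + 1))) :
        {α : Fin n →₀ ℕ // mdeg α ≤ t} → (Fin n → Fin (t + 1)))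
  intro a b hab
  apply Subtype.ext
  ext i
  exact congrArg Fin.val (congrFun hab i)

/-- The moment matrix `M_t[w]`, indexed by monomial powers of degree at most `t`. -/
def momentMatrix {n : ℕ} (t : ℕ) (w : (Fin n →₀ ℕ) → ℝ) :
    Matrix {α : Fin n →₀ ℕ // mdeg α ≤ t} {α : Fin n →₀ ℕ // mdeg α ≤ t} ℝ :=
  fun α β => w (α.1 + β.1)

/-- `w` admits a flat truncation: for some `d0 ≤ t ≤ k`,
`rank M_{t-dK}[w] = rank M_t[w]`. -/
def HasFlatTruncation {n : ℕ} (d0 dK k : ℕ) (w : (Fin n →₀ ℕ) → ℝ) : Prop :=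
  ∃ t : ℕ, d0 ≤ t ∧ t ≤ k ∧
    (momentMatrix (t - dK) w).rank = (momentMatrix t w).rank

/-- The gradient of a polynomial at a point. -/
def gradP {n : ℕ} (p : RPoly n) (u : Fin n → ℝ) : Fin n → ℝ :=
  fun i => eval u (pderiv i p)

/-- The Hessian of a polynomial at a point. -/
def hessP {n : ℕ} (p : RPoly n) (u : Fin n → ℝ) : Fin n → Fin n → ℝ :=
  fun i j => eval u (pderiv i (pderiv j p))

/-- The classical optimality conditions (LICQC, KKT with SCC and SOSC) at the point `u`
for the problem: minimize `F` subject to `ge j = 0` (`j ∈ Es`), `gi j ≥ 0` (`j ∈ Is`). -/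
def OptCondsAt {n : ℕ} {ι κ : Type}
    (Es : Finset ι) (ge : ι → RPoly n) (Is : Finset κ) (gi : κ → RPoly n)
    (F : RPoly n) (u : Fin n → ℝ) : Prop :=
  -- LICQC: gradients of active constraints are linearly independent
  LinearIndependent ℝ
    (Sum.elim
      (fun j : {j : ι // j ∈ Es ∧ eval u (ge j) = 0} => gradP (ge j.1) u)
      (fun j : {j : κ // j ∈ Is ∧ eval u (gi j) = 0} => gradP (gi j.1) u)) ∧
  ∃ (lamE : ι → ℝ) (lamI : κ → ℝ),
    -- KKT stationarity
    (gradP F u =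
      (∑ j ∈ Es, lamE j • gradP (ge j) u) + ∑ j ∈ Is, lamI j • gradP (gi j) u) ∧
    (∀ j ∈ Is, 0 ≤ lamI j ∧ lamI j * eval u (gi j) = 0) ∧
    -- SCC
    (∀ j ∈ Is, 0 < lamI j + eval u (gi j)) ∧
    -- SOSC
    (∀ v : Fin n → ℝ, v ≠ 0 →
      (∀ j ∈ Es, (∑ i, v i * gradP (ge j) u i) = 0) →
      (∀ j ∈ Is, eval u (gi j) = 0 → (∑ i, v i * gradP (gi j) u i) = 0) →
      0 < ∑ i, ∑ i', v i *
        ((hessP F u i i' - ∑ j ∈ Es, lamE j * hessP (ge j) u i i')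
          - ∑ j ∈ Is, lamI j * hessP (gi j) u i i') * v i')

/-- The degree-`ℓ` homogenization `x_0^ℓ p(x/x_0)` of `p`; the new variable `x_0`
is the variable of index `0` in `Fin (n+1)`. -/
def homogAux {n : ℕ} (ℓ : ℕ) (p : RPoly n) : RPoly (n + 1) :=
  ∑ α ∈ p.support,
    monomial
      (Finsupp.single (0 : Fin (n + 1)) (ℓ - mdeg α) + Finsupp.mapDomain Fin.succ α)
      (p.coeff α)

/-- The homogenization `p̃` of `p`. -/
def homogenize {n : ℕ} (p : RPoly n) : RPoly (n + 1) := homogAux p.totalDegree p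

/-- The polynomial `‖x̃‖² - 1`. -/
def sphereP (n : ℕ) : RPoly (n + 1) := (∑ i, (X i : RPoly (n + 1)) ^ 2) - 1

/-- The homogenization `K̃` of the set `K`. -/
def Khom {n : ℕ} (E I : Finset ℕ) (c : ℕ → RPoly n) : Set (Fin (n + 1) → ℝ) :=
  {x | (∀ j ∈ E, eval x (homogenize (c j)) = 0) ∧
       (∀ j ∈ I, 0 ≤ eval x (homogenize (c j))) ∧
       (∑ i, (x i) ^ 2) = 1 ∧ 0 ≤ x 0}

/-- `K` is closed at infinity. -/
def ClosedAtInfinity {n : ℕ} (E I : Finset ℕ) (c : ℕ → RPoly n) : Prop :=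
  Khom E I c = closure (Khom E I c ∩ {x | 0 < x 0})

/-- The tuple `c̃_eq`: the homogenizations `c̃_j` together with `‖x̃‖² - 1`
(the latter indexed by `none`). -/
def gEqH {n : ℕ} (c : ℕ → RPoly n) : Option ℕ → RPoly (n + 1) :=
  fun o => o.elim (sphereP n) (fun j => homogenize (c j))

/-- The tuple `c̃_in`: the homogenizations `c̃_j` together with `x_0`
(the latter indexed by `none`). -/
def gInH {n : ℕ} (c : ℕ → RPoly n) : Option ℕ → RPoly (n + 1) :=
  fun o => o.elim (X 0) (fun j => homogenize (c j))

/-- The index set of a tuple extended by one extra entry (indexed by `none`). -/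
def OS (S : Finset ℕ) : Finset (Option ℕ) := insert none (S.image some)

/-- Feasibility of `θ` for the linear conic problem (P). -/
def PFeas {n m : ℕ} (m1 d : ℕ) (f : RPoly n) (a : Fin m → RPoly n)
    (K : Set (Fin n → ℝ)) (θ : Fin m → ℝ) : Prop :=
  (∀ i : Fin m, m1 ≤ (i : ℕ) → 0 ≤ θ i) ∧ (f - ∑ i, C (θ i) * a i) ∈ PdCone d K

/-- The optimal value `ϑ*` of the linear conic problem (P). -/
def PVal {n m : ℕ} (m1 d : ℕ) (f : RPoly n) (a : Fin m → RPoly n) (b : Fin m → ℝ)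
    (K : Set (Fin n → ℝ)) : ℝ :=
  sSup {v : ℝ | ∃ θ : Fin m → ℝ, PFeas m1 d f a K θ ∧ v = ∑ i, b i * θ i}

/-- Feasibility of `y` for the generalized moment problem (M). -/
def MFeas {n m : ℕ} (m1 d : ℕ) (a : Fin m → RPoly n) (b : Fin m → ℝ)
    (K : Set (Fin n → ℝ)) (y : (Fin n →₀ ℕ) → ℝ) : Prop :=
  InMomentCone d K y ∧
  (∀ i : Fin m, (i : ℕ) < m1 → pairing (a i) y = b i) ∧
  (∀ i : Fin m, m1 ≤ (i : ℕ) → b i ≤ pairing (a i) y)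

/-- The optimal value `φ*` of the generalized moment problem (M). -/
def MVal {n m : ℕ} (m1 d : ℕ) (f : RPoly n) (a : Fin m → RPoly n) (b : Fin m → ℝ)
    (K : Set (Fin n → ℝ)) : ℝ :=
  sInf {v : ℝ | ∃ y : (Fin n →₀ ℕ) → ℝ, MFeas m1 d a b K y ∧ v = pairing f y}

/-- The optimal value `ϑ_k` of the `k`th SOS relaxation of (P). -/
def SOSRelaxVal {n m : ℕ} {ι κ : Type} (m1 : ℕ) (f : RPoly n) (a : Fin m → RPoly n)
    (b : Fin m → ℝ) (Es : Finset ι) (ge : ι → RPoly n) (Is : Finset κ) (gi : κ → RPoly n)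
    (k : ℕ) : ℝ :=
  sSup {v : ℝ | ∃ θ : Fin m → ℝ, (∀ i : Fin m, m1 ≤ (i : ℕ) → 0 ≤ θ i) ∧
      (∃ p1 ∈ IdealDeg Es ge (2 * k), ∃ p2 ∈ QModDeg Is gi (2 * k),
        f - ∑ i, C (θ i) * a i = p1 + p2) ∧
      v = ∑ i, b i * θ i}

/-- The semidefinite constraints of the `k`th moment relaxation:
the localizing vectors of the equality constraints vanish, and the localizing
matrices of the inequality constraints and the moment matrix are positive
semidefinite (stated equivalently via the associated quadratic forms). -/
def MomRelaxPSD {n : ℕ} {ι κ : Type} (Es : Finset ι) (ge : ι → RPoly n)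
    (Is : Finset κ) (gi : κ → RPoly n) (k : ℕ) (w : (Fin n →₀ ℕ) → ℝ) : Prop :=
  (∀ j ∈ Es, ∀ p : RPoly n, p.totalDegree + (ge j).totalDegree ≤ 2 * k →
      pairing (ge j * p) w = 0) ∧
  (∀ j ∈ Is, ∀ p : RPoly n, p.totalDegree + ((gi j).totalDegree + 1) / 2 ≤ k →
      0 ≤ pairing (gi j * p ^ 2) w) ∧
  (∀ p : RPoly n, p.totalDegree ≤ k → 0 ≤ pairing (p ^ 2) w)

/-- Feasibility of `w` for the `k`th moment relaxation of (M). -/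
def GMomFeas {n m : ℕ} {ι κ : Type} (m1 : ℕ) (a : Fin m → RPoly n) (b : Fin m → ℝ)
    (Es : Finset ι) (ge : ι → RPoly n) (Is : Finset κ) (gi : κ → RPoly n) (k : ℕ)
    (w : (Fin n →₀ ℕ) → ℝ) : Prop :=
  (∀ i : Fin m, (i : ℕ) < m1 → pairing (a i) w = b i) ∧
  (∀ i : Fin m, m1 ≤ (i : ℕ) → b i ≤ pairing (a i) w) ∧
  MomRelaxPSD Es ge Is gi k w

/-- The optimal value `φ_k` of the `k`th moment relaxation of (M). -/
def GMomVal {n m : ℕ} {ι κ : Type} (m1 : ℕ) (f : RPoly n) (a : Fin m → RPoly n)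
    (b : Fin m → ℝ) (Es : Finset ι) (ge : ι → RPoly n) (Is : Finset κ) (gi : κ → RPoly n)
    (k : ℕ) : ℝ :=
  sInf {v : ℝ | ∃ w : (Fin n →₀ ℕ) → ℝ,
      GMomFeas m1 a b Es ge Is gi k w ∧ v = pairing f w}

/-- The optimal value `f_k^den` of the `k`th order relaxation with denominators. -/
def DenRelaxVal {n : ℕ} (E I : Finset ℕ) (c : ℕ → RPoly n) (f : RPoly n) (d k : ℕ) : ℝ :=
  sSup {γ : ℝ | ∃ p1 ∈ IdealDeg E c (2 * k + d), ∃ p2 ∈ QModDeg I c (2 * k + d),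
      (1 + ∑ i, (X i : RPoly n) ^ 2) ^ k * (f - C γ) = p1 + p2}


/-- The degree bound `d_K = max_j ⌈deg(c_j)/2⌉`. -/
def dKOrig {n : ℕ} (E I : Finset ℕ) (c : ℕ → RPoly n) : ℕ :=
  (E ∪ I).sup fun j => ((c j).totalDegree + 1) / 2

/-- The degree bound `d_0` for the GMP relaxations. -/
def d0GMP {n m : ℕ} (f : RPoly n) (a : Fin m → RPoly n) (E I : Finset ℕ)
    (c : ℕ → RPoly n) : ℕ :=
  max ((f.totalDegree + 1) / 2)
    (max (dKOrig E I c) (Finset.univ.sup fun i : Fin m => ((a i).totalDegree + 1) / 2))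

/-- The degree bound `d̃_K` for the homogenized constraining tuples. -/
def dKHom {n : ℕ} (E I : Finset ℕ) (c : ℕ → RPoly n) : ℕ :=
  max ((OS E).sup fun o => ((gEqH c o).totalDegree + 1) / 2)
      ((OS I).sup fun o => ((gInH c o).totalDegree + 1) / 2)

end
open MvPolynomial

theorem extreme_state {V : Type*} [AddCommGroup V] [Module ℝ V] (P : V → Prop)
    (h0 : P 0) (hadd : ∀ a b, P a → P b → P (a + b))
    (hsmul : ∀ (r : ℝ) a, 0 ≤ r → P a → P (r • a))
    (e : V) (hunit : ∀ v, ∃ N : ℝ, P (N • e - v)) (F : V)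
    (hF : ∀ ε : ℝ, 0 < ε → ¬ P (F - ε • e)) :
    ∃ φ : V →ₗ[ℝ] ℝ, (∀ v, P v → 0 ≤ φ v) ∧ φ e = 1 ∧ φ F ≤ 0 ∧
      ∀ ψ : V →ₗ[ℝ] ℝ, (∀ v, P v → 0 ≤ ψ v) → (∀ v, P v → ψ v ≤ φ v) →
        0 < ψ e → ψ e < 1 → ∀ v, ψ v = ψ e * φ v := by
  classical
  -- negativity: -e not in P
  have hne : ∀ t : ℝ, P (t • e) → 0 ≤ t := by
    intro t ht
    by_contra hlt
    push Not at hlt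
    obtain ⟨N, hN⟩ := hunit (-F)
    -- F + N e ∈ P ; add s * (t e)
    apply hF 1 one_pos
    by_cases hc : 0 ≤ N + 1
    · have h9 := hadd _ _ hN (hsmul ((N + 1) / (-t)) _ (div_nonneg hc (by linarith)) ht)
      have : N • e - -F + ((N + 1) / (-t)) • t • e = F - (1:ℝ) • e := by
        have ht0 : t ≠ 0 := hlt.ne
        have : (N + 1) / (-t) * t = - N - 1 := by
          rw [div_neg, neg_mul, div_mul_cancel₀ _ ht0]; ring
        rw [smul_smul, this]; module
      rwa [this] at h9
    · exfalso
      apply hF (-N) (by linarith)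
      have : F - (-N) • e = N • e - -F := by module
      rwa [this]
  -- the enlarged cone
  let s : PointedCone ℝ V :=
    { carrier := {v | ∃ q, ∃ r : ℝ, P q ∧ 0 ≤ r ∧ v = q - r • F}
      add_mem' := by
        rintro _ _ ⟨q, r, hq, hr, rfl⟩ ⟨q', r', hq', hr', rfl⟩
        exact ⟨q + q', r + r', hadd _ _ hq hq', add_nonneg hr hr', by module⟩
      zero_mem' := ⟨0, 0, h0, le_rfl, by simp⟩
      smul_mem' := by
        rintro ⟨c, hc⟩ _ ⟨q, r, hq, hr, rfl⟩
        refine ⟨c • q, c * r, hsmul _ _ hc hq, mul_nonneg hc hr, ?_⟩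
        change c • (q - r • F) = _
        module }
  have hs : ∀ v, v ∈ s ↔ ∃ q, ∃ r : ℝ, P q ∧ 0 ≤ r ∧ v = q - r • F := fun v => Iff.rfl
  have he0 : e ≠ 0 := by
    rintro rfl
    have := hne (-1) (by simpa using h0)
    linarith
  obtain ⟨g, hg1, hg2⟩ := riesz_extension s (LinearPMap.mkSpanSingleton e (1:ℝ) he0)
    (by
      rintro ⟨x, hx⟩ hxs
      obtain ⟨t, rfl⟩ := Submodule.mem_span_singleton.1 hx
      have hval : (LinearPMap.mkSpanSingleton e (1:ℝ) he0) ⟨t • e, hx⟩ = t := by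
        erw [LinearPMap.mkSpanSingleton'_apply]; simp
      rw [hval]
      obtain ⟨q, r, hq, hr, h⟩ := (hs _).1 hxs
      simp only at h
      rcases hr.eq_or_lt with rfl | hr
      · apply hne; rw [h]; simpa using hq
      · by_contra hlt
        push Not at hlt
        apply hF (-t / r) (div_pos (by linarith) hr)
        have h1 := hsmul (1 / r) _ (by positivity) hq
        have h2 : q = t • e + r • F := by rw [h]; module
        have : (1 / r) • q = F - (-t / r) • e := by
          rw [h2, smul_add, smul_smul, smul_smul]
          have : 1 / r * r = 1 := by field_simp
          rw [this]
          have : -t / r = - (1 / r * t) := by ring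
          rw [this]; module
        rwa [this] at h1)
    (by
      intro y
      obtain ⟨N, hN⟩ := hunit (-y)
      refine ⟨⟨N • e, Submodule.mem_span_singleton.2 ⟨N, rfl⟩⟩, ?_⟩
      rw [hs]
      exact ⟨_, 0, hN, le_rfl, by simp⟩)
  have hge : g e = 1 := by
    have := hg1 ⟨e, Submodule.mem_span_singleton_self e⟩
    erw [LinearPMap.mkSpanSingleton_apply] at this
    exact this
  have hgP : ∀ v, P v → 0 ≤ g v := fun v hv => hg2 v ((hs v).2 ⟨v, 0, hv, le_rfl, by simp⟩)
  have hgF : g F ≤ 0 := by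
    have := hg2 (-F) ((hs _).2 ⟨0, 1, h0, zero_le_one, by simp⟩)
    simpa using this
  -- the state space
  choose N hN using hunit
  let St : Set (V → ℝ) := {φ | (∀ a b, φ (a + b) = φ a + φ b) ∧
    (∀ (r : ℝ) a, φ (r • a) = r * φ a) ∧ (∀ v, P v → 0 ≤ φ v) ∧ φ e = 1}
  have hStcl : IsClosed St := by
    have h1 : IsClosed {φ : V → ℝ | ∀ a b, φ (a + b) = φ a + φ b} := by
      simp only [Set.ofPred_forall]
      refine isClosed_iInter fun a => isClosed_iInter fun b => ?_
      exact isClosed_eq (by fun_prop) (by fun_prop)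
    have h2 : IsClosed {φ : V → ℝ | ∀ (r : ℝ) a, φ (r • a) = r * φ a} := by
      simp only [Set.ofPred_forall]
      refine isClosed_iInter fun a => isClosed_iInter fun b => ?_
      exact isClosed_eq (continuous_apply _) (continuous_const.mul (continuous_apply _))
    have h3 : IsClosed {φ : V → ℝ | ∀ v, P v → 0 ≤ φ v} := by
      simp only [Set.ofPred_forall]
      refine isClosed_iInter fun a => isClosed_iInter fun b => ?_
      exact isClosed_le continuous_const (continuous_apply _)
    have h4 : IsClosed {φ : V → ℝ | φ e = 1} :=
      isClosed_eq (continuous_apply _) continuous_const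
    exact h1.inter (h2.inter (h3.inter h4))
  have hStb : St ⊆ Set.pi Set.univ (fun v => Set.Icc (-N (-v)) (N v)) := by
    rintro φ ⟨ha, hs, hp, he⟩ v -
    have hneg : ∀ v, φ (-v) = - φ v := fun v => by
      have := hs (-1) v; simpa using this
    have hbd : ∀ v, φ v ≤ N v := fun v => by
      have := hp _ (hN v)
      rw [sub_eq_add_neg, ha, hs, he, hneg] at this
      linarith
    have := hbd (-v)
    rw [hneg] at this
    exact ⟨by linarith, hbd v⟩
  have hStc : IsCompact St :=
    (isCompact_univ_pi (fun v => isCompact_Icc)).of_isClosed_subset hStcl hStb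
  have hgSt : (g : V → ℝ) ∈ St := ⟨fun a b => map_add g a b, fun r a => by simp, hgP, hge⟩
  -- the minimizing face
  obtain ⟨φ0, hφ0, hmin⟩ := hStc.exists_isMinOn ⟨_, hgSt⟩
    (continuous_apply F).continuousOn
  have hmin' : ∀ φ ∈ St, φ0 F ≤ φ F := fun φ hφ => hmin hφ
  let Fc : Set (V → ℝ) := {φ ∈ St | φ F ≤ φ0 F}
  have hFcc : IsCompact Fc := by
    refine hStc.of_isClosed_subset ?_ (fun x hx => hx.1)
    exact hStcl.inter (isClosed_le (continuous_apply _) continuous_const)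
  obtain ⟨φ, hφ⟩ := hFcc.extremePoints_nonempty ⟨φ0, hφ0, le_rfl⟩
  rw [mem_extremePoints] at hφ
  obtain ⟨⟨hφS, hφF⟩, hext⟩ := hφ
  have hφS' := hφS
  obtain ⟨ha, hs', hp, he⟩ := hφS'
  refine ⟨⟨⟨φ, ha⟩, by intro r x; simpa using hs' r x⟩, hp, he, ?_, ?_⟩
  · exact hφF.trans ((hmin' _ hgSt).trans hgF)
  · intro ψ hψ1 hψ2 hpos hlt v
    change ψ v = ψ e * φ v
    have hψ2 : ∀ v, P v → ψ v ≤ φ v := hψ2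
    set t := ψ e with ht
    let a1 : V → ℝ := fun v => t⁻¹ * ψ v
    let a2 : V → ℝ := fun v => (1 - t)⁻¹ * (φ v - ψ v)
    have h1 : a1 ∈ St := by
      refine ⟨fun a b => ?_, fun r a => ?_, fun v hv => ?_, ?_⟩
      · simp only [a1, map_add]; ring
      · simp only [a1, map_smul, smul_eq_mul]; ring
      · exact mul_nonneg (inv_nonneg.2 hpos.le) (hψ1 v hv)
      · simp only [a1]; rw [← ht]; field_simp
    have h1t : 1 - t ≠ 0 := by linarith
    have h2 : a2 ∈ St := by
      refine ⟨fun a b => ?_, fun r a => ?_, fun v hv => ?_, ?_⟩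
      · simp only [a2, map_add, ha]; ring
      · simp only [a2, map_smul, smul_eq_mul, hs']; ring
      · exact mul_nonneg (inv_nonneg.2 (by linarith)) (by linarith [hψ2 v hv])
      · simp only [a2]; rw [← ht, he]; field_simp
    have hcomb : ∀ v, t * a1 v + (1 - t) * a2 v = φ v := fun v => by
      simp only [a1, a2]; field_simp; ring
    have hF1 := hmin' _ h1
    have hF2 := hmin' _ h2
    have hFF := hcomb F
    have h1' : a1 ∈ Fc := by
      refine ⟨h1, ?_⟩
      by_contra hh
      push Not at hh
      nlinarith
    have h2' : a2 ∈ Fc := by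
      refine ⟨h2, ?_⟩
      by_contra hh
      push Not at hh
      nlinarith
    have := hext a1 h1' a2 h2' ⟨t, 1 - t, hpos, by linarith, by ring, by
      funext v; simpa using hcomb v⟩
    have h3 := congrFun this.1 v
    simp only [a1] at h3
    rw [← h3]; field_simp

open MvPolynomial

theorem seq_growth (a : ℕ → ℝ) (C R : ℝ) (hR : 0 < R) (ha : ∀ k, 0 ≤ a k)
    (hcs : ∀ k, a k ^ 2 ≤ a 0 * a (2 * k)) (hb : ∀ k, a k ≤ C * R ^ k) : a 1 ≤ R * a 0 := by
  rcases (ha 0).eq_or_lt with h0 | h0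
  · have := hcs 1
    rw [← h0] at this ⊢
    nlinarith [ha 1]
  by_contra hlt
  push Not at hlt
  set r := a 1 / (R * a 0) with hr
  have hr1 : 1 < r := by rw [hr, one_lt_div (by positivity)]; exact hlt
  have key : ∀ j : ℕ, a 0 * r ^ (2 ^ j) * R ^ (2 ^ j) ≤ a (2 ^ j) := by
    intro j
    induction j with
    | zero => simp [hr]; field_simp; rfl
    | succ j ih =>
      have h1 := hcs (2 ^ j)
      have h2 : (a 0 * r ^ (2 ^ j) * R ^ (2 ^ j)) ^ 2 ≤ a (2 ^ j) ^ 2 :=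
        pow_le_pow_left₀ (by positivity) ih 2
      have h3 : (a 0 * r ^ (2 ^ j) * R ^ (2 ^ j)) ^ 2
          = a 0 * (a 0 * r ^ (2 ^ (j+1)) * R ^ (2 ^ (j+1))) := by ring
      rw [h3] at h2
      have h4 := h2.trans h1
      have h5 : 2 * 2 ^ j = 2 ^ (j + 1) := by ring
      rw [h5] at h4
      exact le_of_mul_le_mul_left h4 h0
  have hbd : ∀ j : ℕ, a 0 * r ^ (2 ^ j) ≤ C := by
    intro j
    have := (key j).trans (hb _)
    exact le_of_mul_le_mul_right this (by positivity)
  obtain ⟨m, hm⟩ := pow_unbounded_of_one_lt (C / a 0) hr1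
  have h1 : r ^ m ≤ r ^ (2 ^ m) := pow_le_pow_right₀ hr1.le (Nat.lt_two_pow_self).le
  have h2 := hbd m
  rw [div_lt_iff₀ h0] at hm
  nlinarith

structure IsQM {n : ℕ} (Q : RPoly n → Prop) (R : ℝ) : Prop where
  add : ∀ a b, Q a → Q b → Q (a + b)
  sq : ∀ p, Q (p ^ 2)
  mul : ∀ p q, Q q → Q (p ^ 2 * q)
  pos : 0 < R
  arch : Q (C R - ∑ i, (X i : RPoly n) ^ 2)

namespace IsQM
variable {n : ℕ} {Q : RPoly n → Prop} {R : ℝ}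

theorem zero (h : IsQM Q R) : Q 0 := by simpa using h.sq 0

theorem smul (h : IsQM Q R) (r : ℝ) (hr : 0 ≤ r) (q : RPoly n) (hq : Q q) : Q (C r * q) := by
  have := h.mul (C (Real.sqrt r)) q hq
  rwa [← C_pow, Real.sq_sqrt hr] at this

theorem sum (h : IsQM Q R) {ι : Type*} (s : Finset ι) (g : ι → RPoly n) (hg : ∀ i ∈ s, Q (g i)) :
    Q (∑ i ∈ s, g i) := by
  classical
  induction s using Finset.induction_on with
  | empty => simpa using h.zero
  | insert a s ha ih =>
    rw [Finset.sum_insert ha]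
    exact h.add _ _ (hg _ (Finset.mem_insert_self _ _))
      (ih fun i hi => hg i (Finset.mem_insert_of_mem hi))

theorem archi (h : IsQM Q R) (i : Fin n) : Q (C R - X i ^ 2) := by
  classical
  have h1 := h.add _ _ h.arch (h.sum (Finset.univ.erase i) (fun j => X j ^ 2) fun j _ => h.sq _)
  rw [← Finset.add_sum_erase _ _ (Finset.mem_univ i)] at h1
  convert h1 using 1
  ring

/-- iterate -/
theorem archi_pow (h : IsQM Q R) (i : Fin n) (a : RPoly n) (m : ℕ) :
    Q (C (R ^ m) * a ^ 2 - X i ^ (2 * m) * a ^ 2) := by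
  induction m with
  | zero => simpa using h.zero
  | succ m ih =>
    have h1 := h.smul R h.pos.le _ ih
    have h2 := h.mul (X i ^ m * a) _ (h.archi i)
    have h3 := h.add _ _ h1 h2
    convert h3 using 1
    rw [pow_succ R, C_mul, C_pow]
    ring

/-- `a` is bounded by `θ`. -/
def Bd (Q : RPoly n → Prop) (θ a : RPoly n) : Prop := ∃ N : ℝ, 0 ≤ N ∧ Q (C N * θ - a ^ 2)

theorem bd_mul (h : IsQM Q R) (θ : RPoly n) (p a : RPoly n) (ha : Bd Q θ a) : Bd Q θ (p * a) := by
  induction p using MvPolynomial.induction_on with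
  | C r =>
    obtain ⟨N, hN, hQ⟩ := ha
    refine ⟨r ^ 2 * N, by positivity, ?_⟩
    convert h.mul (C r) _ hQ using 1
    simp only [C_mul, C_pow]; ring
  | add p q hp hq =>
    obtain ⟨N, hN, hQ⟩ := hp
    obtain ⟨N', hN', hQ'⟩ := hq
    refine ⟨2 * (N + N'), by positivity, ?_⟩
    have h1 := h.add _ _ (h.smul 2 zero_le_two _ (h.add _ _ hQ hQ')) (h.sq (p * a - q * a))
    convert h1 using 1
    simp only [C_mul, C_add]
    have : (C 2 : RPoly n) = 2 := map_ofNat C 2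
    rw [this]; ring
  | mul_X p i hp =>
    obtain ⟨N, hN, hQ⟩ := hp
    refine ⟨R * N, mul_nonneg h.pos.le hN, ?_⟩
    have h1 := h.add _ _ (h.smul R h.pos.le _ hQ) (h.mul (p * a) _ (h.archi i))
    convert h1 using 1
    simp only [C_mul]; ring

theorem bd_add (h : IsQM Q R) (θ : RPoly n) (a b : RPoly n) (ha : Bd Q θ a) (hb : Bd Q θ b) :
    Bd Q θ (a + b) := by
  obtain ⟨N, hN, hQ⟩ := ha
  obtain ⟨N', hN', hQ'⟩ := hb
  refine ⟨2 * (N + N'), by positivity, ?_⟩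
  have h1 := h.add _ _ (h.smul 2 zero_le_two _ (h.add _ _ hQ hQ')) (h.sq (a - b))
  convert h1 using 1
  simp only [C_mul, C_add]
  have : (C 2 : RPoly n) = 2 := map_ofNat C 2
  rw [this]; ring

theorem bd_span (h : IsQM Q R) (B : Finset (RPoly n)) (a : RPoly n)
    (ha : a ∈ Ideal.span (B : Set (RPoly n))) : Bd Q (∑ b ∈ B, b ^ 2) a := by
  classical
  induction ha using Submodule.span_induction with
  | mem x hx =>
    refine ⟨1, zero_le_one, ?_⟩
    rw [← Finset.add_sum_erase _ _ hx]
    convert h.sum (B.erase x) (fun b => b ^ 2) (fun b _ => h.sq b) using 1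
    simp
  | zero => exact ⟨0, le_rfl, by simpa using h.zero⟩
  | add x y _ _ hx hy => exact h.bd_add _ _ _ hx hy
  | smul p x _ hx => exact h.bd_mul _ p x hx

theorem growth (h : IsQM Q R) (I : Ideal (RPoly n)) (θ : RPoly n) (hθ : ∀ a ∈ I, Bd Q θ a)
    (i : Fin n) (g : RPoly n) (hg : g ∈ I * I) :
    ∃ N : ℝ, 0 ≤ N ∧ ∀ m : ℕ, Q (C (N * R ^ m) * θ - X i ^ (2 * m) * g) ∧
      Q (C (N * R ^ m) * θ + X i ^ (2 * m) * g) := by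
  have hR := h.pos
  refine Submodule.mul_induction_on hg (fun a ha b hb => ?_) (fun a b ha hb => ?_)
  · obtain ⟨N, hN, hQ⟩ := hθ a ha
    obtain ⟨N', hN', hQ'⟩ := hθ b hb
    refine ⟨2⁻¹ * (N + N'), by positivity, fun m => ?_⟩
    have key : ∀ s : RPoly n, Q (C (2⁻¹ * (N + N') * R ^ m) * θ -
        C 2⁻¹ * (X i ^ (2 * m) * (a ^ 2 + b ^ 2)) + C 2⁻¹ * (X i ^ m * (a + s * b)) ^ 2) := by
      intro s
      have h1 := h.smul (2⁻¹) (by norm_num) _ (h.add _ _ (h.smul (R ^ m) (by positivity) _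
        (h.add _ _ hQ hQ')) (h.add _ _ (h.archi_pow i a m) (h.archi_pow i b m)))
      have h2 := h.smul (2⁻¹) (by norm_num) _ (h.sq (X i ^ m * (a + s * b)))
      convert h.add _ _ h1 h2 using 1
      simp only [C_mul, C_add]
      ring
    have h2 : (C 2⁻¹ : RPoly n) * 2 = 1 := by
      have : (2 : RPoly n) = C 2 := (map_ofNat C 2).symm
      rw [this, ← C_mul]; norm_num
    constructor
    · convert key (-1) using 1
      linear_combination ((X i ^ (2 * m) * (a * b))) * h2
    · convert key 1 using 1
      linear_combination (-(X i ^ (2 * m) * (a * b))) * h2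
  · obtain ⟨N, hN, hQ⟩ := ha
    obtain ⟨N', hN', hQ'⟩ := hb
    refine ⟨N + N', by positivity, fun m => ⟨?_, ?_⟩⟩
    · convert h.add _ _ (hQ m).1 (hQ' m).1 using 1
      simp only [C_mul, C_add]; ring
    · convert h.add _ _ (hQ m).2 (hQ' m).2 using 1
      simp only [C_mul, C_add]; ring

/-- order unit when there may be no variables -/
theorem orderunit (h : IsQM Q R) (I : Ideal (RPoly n)) (θ : RPoly n) (hθ : ∀ a ∈ I, Bd Q θ a)
    (g : RPoly n) (hg : g ∈ I * I) :
    ∃ N : ℝ, Q (C N * θ - g) := by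
  refine Submodule.mul_induction_on hg (fun a ha b hb => ?_) (fun a b ha hb => ?_)
  · obtain ⟨N, hN, hQ⟩ := hθ a ha
    obtain ⟨N', hN', hQ'⟩ := hθ b hb
    refine ⟨2⁻¹ * (N + N'), ?_⟩
    have h1 := h.smul (2⁻¹) (by norm_num) _ (h.add _ _ (h.add _ _ hQ hQ') (h.sq (a - b)))
    have h2 : (C 2⁻¹ : RPoly n) * 2 = 1 := by
      have : (2 : RPoly n) = C 2 := (map_ofNat C 2).symm
      rw [this, ← C_mul]; norm_num
    convert h1 using 1
    simp only [C_mul, C_add]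
    linear_combination (a * b) * h2
  · obtain ⟨N, hQ⟩ := ha
    obtain ⟨N', hQ'⟩ := hb
    refine ⟨N + N', ?_⟩
    convert h.add _ _ hQ hQ' using 1
    simp only [C_add]; ring

theorem pure_state (h : IsQM Q R) (I : Ideal (RPoly n)) (θ : RPoly n) (hθ : ∀ a ∈ I, Bd Q θ a)
    (hθJ : θ ∈ I * I) (hθQ : Q θ) (F : RPoly n) (hFJ : F ∈ I * I)
    (hF : ∀ ε : ℝ, 0 < ε → ¬ Q (F - C ε * θ)) :
    ∃ (φ : RPoly n →ₗ[ℝ] ℝ) (x : Fin n → ℝ), (∀ g ∈ I * I, Q g → 0 ≤ φ g) ∧ φ θ = 1 ∧ φ F ≤ 0 ∧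
      ∀ p, ∀ g ∈ I * I, φ (p * g) = eval x p * φ g := by
  classical
  have hR := h.pos
  let J : Submodule ℝ (RPoly n) := (I * I).restrictScalars ℝ
  have hJ : ∀ g, g ∈ J ↔ g ∈ I * I := fun g => Iff.rfl
  obtain ⟨φ0, h1, h2, h3, h4⟩ := extreme_state (V := J) (fun g => Q g.1)
    (by simpa using h.zero) (fun a b ha hb => by simpa using h.add _ _ ha hb)
    (fun r a hr ha => by simpa [smul_eq_C_mul] using h.smul r hr _ ha)
    ⟨θ, hθJ⟩ (fun v => by
      obtain ⟨N, hN⟩ := h.orderunit I θ hθ v.1 v.2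
      exact ⟨N, by simpa [smul_eq_C_mul] using hN⟩) ⟨F, hFJ⟩
    (fun ε hε => by simpa [smul_eq_C_mul] using hF ε hε)
  obtain ⟨φ, hφ⟩ := φ0.exists_extend
  have hφv : ∀ g (hg : g ∈ J), φ g = φ0 ⟨g, hg⟩ := fun g hg => by
    rw [← hφ]; rfl
  have hpos : ∀ g ∈ I * I, Q g → 0 ≤ φ g := fun g hg hQ => by
    rw [hφv g hg]; exact h1 _ hQ
  have hunit : φ θ = 1 := by rw [hφv θ hθJ]; exact h2
  -- boundedness
  have hbd : ∀ i, ∀ g ∈ I * I, Q g → φ (X i ^ 2 * g) ≤ R * φ g := by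
    intro i g hg hQ
    obtain ⟨N, hN, hN'⟩ := h.growth I θ hθ i g hg
    have := seq_growth (fun k => φ (X i ^ (2 * k) * g)) N R hR
      (fun k => hpos _ (Ideal.mul_mem_left _ _ hg) (by
        rw [mul_comm 2 k, pow_mul]; exact h.mul _ _ hQ))
      (fun k => by
        have hq : ∀ t : ℝ, 0 ≤ φ ((C t + X i ^ (2 * k)) ^ 2 * g) := fun t =>
          hpos _ (Ideal.mul_mem_left _ _ hg) (h.mul _ _ hQ)
        have hexp : ∀ t : ℝ, φ ((C t + X i ^ (2 * k)) ^ 2 * g)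
            = φ (X i ^ (2 * 0) * g) * (t * t) + (2 * φ (X i ^ (2 * k) * g)) * t
              + φ (X i ^ (2 * (2 * k)) * g) := by
          intro t
          have : (C t + X i ^ (2 * k)) ^ 2 * g = (t * t) • (X i ^ (2 * 0) * g)
              + (2 * t) • (X i ^ (2 * k) * g) + X i ^ (2 * (2 * k)) * g := by
            simp only [smul_eq_C_mul, C_mul]
            have : (C 2 : RPoly n) = 2 := map_ofNat C 2
            rw [this]; ring
          rw [this, map_add, map_add, map_smul, map_smul]
          simp only [smul_eq_mul]; ring
        have := discrim_le_zero (fun t => by rw [← hexp t]; exact hq t)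
        simp only [discrim] at this
        nlinarith)
      (fun k => by
        have := hpos _ (Ideal.sub_mem _ (Ideal.mul_mem_left _ _ hθJ) (Ideal.mul_mem_left _ _ hg)) (hN' k).1
        rw [map_sub, ← smul_eq_C_mul, map_smul, hunit] at this
        simp only [smul_eq_mul] at this
        linarith)
    simpa using this
  set B := Real.sqrt R + 1 with hB
  have hs0 : 0 < Real.sqrt R := Real.sqrt_pos.2 hR
  have hsR : Real.sqrt R ^ 2 = R := Real.sq_sqrt hR.le
  -- linear bounds with sqrt R
  have hlin : ∀ i, ∀ g ∈ I * I, Q g → |φ (X i * g)| ≤ Real.sqrt R * φ g := by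
    intro i g hg hQ
    have hb := hbd i g hg hQ
    have key : ∀ s : ℝ, 0 ≤ φ ((C s + X i) ^ 2 * g) := fun s =>
      hpos _ (Ideal.mul_mem_left _ _ hg) (h.mul _ _ hQ)
    have hexp : ∀ s : ℝ, φ ((C s + X i) ^ 2 * g) = s ^ 2 * φ g + 2 * s * φ (X i * g)
        + φ (X i ^ 2 * g) := by
      intro s
      have : (C s + X i) ^ 2 * g = (s ^ 2) • g + (2 * s) • (X i * g) + X i ^ 2 * g := by
        simp only [smul_eq_C_mul, C_mul, C_pow]
        have : (C 2 : RPoly n) = 2 := map_ofNat C 2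
        rw [this]; ring
      rw [this, map_add, map_add, map_smul, map_smul]
      simp only [smul_eq_mul]
    have k1 := key (Real.sqrt R)
    have k2 := key (- Real.sqrt R)
    rw [hexp] at k1 k2
    rw [abs_le]
    rw [neg_sq] at k2
    rw [hsR] at k1 k2
    have e : R * φ g = Real.sqrt R * (Real.sqrt R * φ g) := by rw [← mul_assoc, ← pow_two, hsR]
    constructor
    · refine le_of_mul_le_mul_left (a := Real.sqrt R) ?_ hs0
      linarith
    · refine le_of_mul_le_mul_left (a := Real.sqrt R) ?_ hs0
      linarith
  -- eigen
  have heig : ∀ i, ∀ g ∈ I * I, φ (X i * g) = φ (X i * θ) * φ g := by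
    intro i g hg
    let ψ : J →ₗ[ℝ] ℝ := (2 * B)⁻¹ • (φ ∘ₗ (LinearMap.mulLeft ℝ (C B + X i)) ∘ₗ J.subtype)
    have hψ : ∀ v : J, ψ v = (2 * B)⁻¹ * (B * φ v.1 + φ (X i * v.1)) := by
      intro v
      simp only [ψ, LinearMap.smul_apply, LinearMap.comp_apply, LinearMap.mulLeft_apply,
        Submodule.subtype_apply, smul_eq_mul, add_mul, map_add, ← smul_eq_C_mul, map_smul]
    have hBpos : 0 < B := by positivity
    have hθB : |φ (X i * θ)| ≤ Real.sqrt R := by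
      simpa [hunit] using hlin i θ hθJ hθQ
    have hψe : ψ ⟨θ, hθJ⟩ = (2 * B)⁻¹ * (B + φ (X i * θ)) := by rw [hψ, hunit]; ring
    rw [abs_le] at hθB
    have := h4 ψ (fun v hv => by
        rw [hψ]
        have := abs_le.1 (hlin i v.1 v.2 hv)
        have hp := hpos _ v.2 hv
        apply mul_nonneg (by positivity)
        nlinarith) (fun v hv => by
        rw [hψ, ← hφv v.1 v.2]
        have := abs_le.1 (hlin i v.1 v.2 hv)
        have hp := hpos _ v.2 hv
        rw [inv_mul_le_iff₀ (by positivity)]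
        nlinarith) (by
        rw [hψe]; apply mul_pos (by positivity); linarith) (by
        rw [hψe, inv_mul_lt_iff₀ (by positivity)]; linarith) ⟨g, hg⟩
    rw [hψe, hψ, ← hφv g hg] at this
    have hB0 : (2 * B)⁻¹ ≠ 0 := by positivity
    simp only [mul_assoc] at this
    have := mul_left_cancel₀ hB0 this
    linarith
  refine ⟨φ, fun i => φ (X i * θ), hpos, hunit, by rw [hφv F hFJ]; exact h3, ?_⟩
  intro p g hg
  induction p using MvPolynomial.induction_on with
  | C r => rw [← smul_eq_C_mul, map_smul]; simp
  | add p q hp hq => rw [add_mul, map_add, hp, hq, map_add]; ring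
  | mul_X p i hp =>
    have : p * X i * g = X i * (p * g) := by ring
    rw [this, heig i _ (Ideal.mul_mem_left _ _ hg), hp]
    simp; ring

end IsQM

open MvPolynomial

/-- the maximal ideal at a point -/
noncomputable def mI {n : ℕ} (u : Fin n → ℝ) : Ideal (RPoly n) := RingHom.ker (eval u)

theorem mem_mI {n : ℕ} (u : Fin n → ℝ) (p : RPoly n) : p ∈ mI u ↔ eval u p = 0 := RingHom.mem_ker

/-- local coordinate -/
noncomputable def dV {n : ℕ} (u : Fin n → ℝ) (a : Fin n) : RPoly n := X a - C (u a)

theorem dV_mem {n : ℕ} (u : Fin n → ℝ) (a : Fin n) : dV u a ∈ mI u := by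
  simp [mem_mI, dV]

theorem mI_eq_span {n : ℕ} (u : Fin n → ℝ) : mI u = Ideal.span (Set.range (dV u)) := by
  apply le_antisymm
  · intro p hp
    have key : ∀ p : RPoly n, p - C (eval u p) ∈ Ideal.span (Set.range (dV u)) := by
      intro p
      induction p using MvPolynomial.induction_on with
      | C r => simp
      | add p q hp hq =>
        have := Ideal.add_mem _ hp hq
        convert this using 1
        simp only [map_add]; ring
      | mul_X p i hp =>
        have h1 := Ideal.mul_mem_left _ p (Ideal.subset_span (Set.mem_range_self (f := dV u) i))
        have h2 := Ideal.mul_mem_left _ (C (u i)) hp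
        convert Ideal.add_mem _ h1 h2 using 1
        simp only [map_mul, eval_X, dV]; ring
    have := key p
    rw [(mem_mI u p).1 hp] at this
    simpa using this
  · rw [Ideal.span_le]
    rintro _ ⟨a, rfl⟩
    exact dV_mem u a

theorem mI_coprime {n : ℕ} {u v : Fin n → ℝ} (h : u ≠ v) : IsCoprime (mI u) (mI v) := by
  obtain ⟨i, hi⟩ := Function.ne_iff.1 h
  rw [Ideal.isCoprime_iff_exists]
  have h0 : v i - u i ≠ 0 := fun h => hi (by linarith)
  refine ⟨C (v i - u i)⁻¹ * dV u i, Ideal.mul_mem_left _ _ (dV_mem _ _),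
    - C (v i - u i)⁻¹ * dV v i, Ideal.mul_mem_left _ _ (dV_mem _ _), ?_⟩
  have : (C (v i - u i)⁻¹ : RPoly n) * C (v i - u i) = 1 := by
    rw [← C_mul, inv_mul_cancel₀ h0]; simp
  simp only [dV]
  rw [C_sub] at this
  linear_combination this

theorem lagrange_exists {n : ℕ} (u : Fin n → ℝ) (S : Finset (Fin n → ℝ)) :
    ∃ E : RPoly n, eval u E = 1 ∧ ∀ v ∈ S, v ≠ u → eval v E = 0 := by
  classical
  induction S using Finset.induction_on with
  | empty => exact ⟨1, by simp, by simp⟩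
  | insert v S hv ih =>
    obtain ⟨E, h1, h2⟩ := ih
    by_cases h : v = u
    · refine ⟨E, h1, fun w hw hwu => ?_⟩
      rcases Finset.mem_insert.1 hw with rfl | hw
      · exact absurd h hwu
      · exact h2 w hw hwu
    · obtain ⟨i, hi⟩ := Function.ne_iff.1 h
      have h0 : u i - v i ≠ 0 := fun h => hi (by linarith)
      refine ⟨E * (C (u i - v i)⁻¹ * dV v i), ?_, fun w hw hwu => ?_⟩
      · simp [h1, dV, h0]
      · rcases Finset.mem_insert.1 hw with rfl | hw
        · simp [dV]
        · simp [h2 w hw hwu]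

/-- the vanishing ideal of a finite set -/
noncomputable def vI {n : ℕ} (S : Finset (Fin n → ℝ)) : Ideal (RPoly n) := ⨅ u ∈ S, mI u

theorem mem_vI {n : ℕ} (S : Finset (Fin n → ℝ)) (p : RPoly n) :
    p ∈ vI S ↔ ∀ u ∈ S, eval u p = 0 := by
  simp [vI, Submodule.mem_iInf, mem_mI]

theorem mem_vI_sq {n : ℕ} (S : Finset (Fin n → ℝ)) (p : RPoly n) (h : ∀ u ∈ S, p ∈ mI u ^ 2) :
    p ∈ vI S * vI S := by
  have h1 : ∏ u ∈ S, mI u = vI S := Ideal.prod_eq_iInf_of_pairwise_isCoprime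
    (fun u _ v _ huv => mI_coprime huv)
  have h2 : ∏ u ∈ S, mI u ^ 2 = ⨅ u ∈ S, mI u ^ 2 := Ideal.prod_eq_iInf_of_pairwise_isCoprime
    (fun u _ v _ huv => (mI_coprime huv).pow)
  rw [← pow_two, ← h1, ← Finset.prod_pow, h2]
  simpa [Submodule.mem_iInf] using h

/-- `F` vanishes to second order at `u` with positive definite Hessian. -/
def LocPD {n : ℕ} (F : RPoly n) (u : Fin n → ℝ) : Prop :=
  ∃ (m : ℕ) (B : Fin m → Fin n → ℝ) (c : ℝ), 0 < c ∧
    F - (∑ i, (∑ a, C (B i a) * dV u a) ^ 2 + C c * ∑ a, dV u a ^ 2) ∈ mI u ^ 3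

theorem LocPD.sq_mem {n : ℕ} {F : RPoly n} {u : Fin n → ℝ} (h : LocPD F u) : F ∈ mI u ^ 2 := by
  obtain ⟨m, B, c, hc, h⟩ := h
  have h1 := Ideal.pow_le_pow_right (show 2 ≤ 3 by norm_num) h
  rw [← sub_add_cancel F (∑ i, (∑ a, C (B i a) * dV u a) ^ 2 + C c * ∑ a, dV u a ^ 2)]
  refine Ideal.add_mem _ h1 (Ideal.add_mem _ (Ideal.sum_mem _ fun i _ => ?_)
    (Ideal.mul_mem_left _ _ (Ideal.sum_mem _ fun i _ => ?_)))
  · exact Ideal.pow_mem_pow (Ideal.sum_mem _ fun a _ => Ideal.mul_mem_left _ _ (dV_mem u a)) 2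
  · exact Ideal.pow_mem_pow (dV_mem u i) 2

theorem LocPD.congr {n : ℕ} {F G : RPoly n} {u : Fin n → ℝ} (h : LocPD F u)
    (hG : G - F ∈ mI u ^ 3) : LocPD G u := by
  obtain ⟨m, B, c, hc, h⟩ := h
  refine ⟨m, B, c, hc, ?_⟩
  convert Ideal.add_mem _ hG h using 1
  ring

theorem main_cert {n : ℕ} {Q : RPoly n → Prop} {R : ℝ} (h : IsQM Q R)
    (S : Finset (Fin n → ℝ)) (F : RPoly n) (hloc : ∀ u ∈ S, LocPD F u)
    (hpos : ∀ x ∉ S, (∀ q, Q q → 0 ≤ eval x q) → 0 < eval x F)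
    (p : RPoly n) (hp : ∀ u ∈ S, eval u p = 0) : ∃ ε : ℝ, 0 < ε ∧ Q (F - C ε * p ^ 2) := by
  classical
  obtain ⟨B, hB⟩ := IsNoetherian.noetherian (vI S)
  set θ : RPoly n := ∑ b ∈ B, b ^ 2 with hθdef
  have hθ : ∀ a ∈ vI S, IsQM.Bd Q θ a := fun a ha => h.bd_span B a (by rw [← hB] at ha; exact ha)
  have hBI : ∀ b ∈ B, b ∈ vI S := fun b hb => by rw [← hB]; exact Submodule.subset_span hb
  have hθJ : θ ∈ vI S * vI S := Ideal.sum_mem _ fun b hb => by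
    rw [pow_two]; exact Ideal.mul_mem_mul (hBI b hb) (hBI b hb)
  have hθQ : Q θ := h.sum _ _ fun b _ => h.sq b
  have hFJ : F ∈ vI S * vI S := mem_vI_sq S F fun u hu => (hloc u hu).sq_mem
  by_contra hcon
  push Not at hcon
  have hF : ∀ ε : ℝ, 0 < ε → ¬ Q (F - C ε * θ) := by
    intro ε hε hQ
    obtain ⟨N, hN, hQN⟩ := hθ p ((mem_vI S p).2 hp)
    refine hcon (ε / (N + 1)) (by positivity) ?_
    have h1 := h.smul (ε / (N + 1)) (by positivity) _ (h.add _ _ hQN hθQ)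
    have h2 := h.add _ _ hQ h1
    convert h2 using 1
    have h3 : ε = ε / (N + 1) * (N + 1) := by field_simp
    have h4 : (C ε : RPoly n) = C (ε / (N + 1)) * (C N + 1) := by
      conv_lhs => rw [h3]
      simp
    rw [h4]; ring
  obtain ⟨φ, x, h1, h2, h3, h4⟩ := h.pure_state (vI S) θ hθ hθJ hθQ F hFJ hF
  have hx : ∀ q, Q q → 0 ≤ eval x q := by
    intro q hq
    have e := h4 q θ hθJ
    rw [h2, mul_one] at e
    rw [← e]
    apply h1 _ (Ideal.mul_mem_left _ _ hθJ)
    rw [hθdef, Finset.mul_sum]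
    exact h.sum _ _ fun b _ => by rw [mul_comm]; exact h.mul b q hq
  by_cases hxS : x ∈ S
  · obtain ⟨m, B', c, hc, hm⟩ := hloc x hxS
    obtain ⟨E, hE1, hE2⟩ := lagrange_exists x S
    have hEm : ∀ a ∈ mI x, E * a ∈ vI S := by
      intro a ha
      rw [mem_vI]
      intro v hv
      by_cases hvx : v = x
      · subst hvx; rw [map_mul, (mem_mI _ _).1 ha, mul_zero]
      · rw [map_mul, hE2 v hv hvx, zero_mul]
    have hEE : ∀ a ∈ mI x ^ 2, E ^ 2 * a ∈ vI S * vI S := by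
      intro a ha
      rw [pow_two (mI x)] at ha
      refine Submodule.mul_induction_on ha (fun y hy z hz => ?_) (fun y z hy hz => ?_)
      · have := Ideal.mul_mem_mul (hEm y hy) (hEm z hz)
        convert this using 1; ring
      · rw [mul_add]; exact Ideal.add_mem _ hy hz
    have hE3 : ∀ a ∈ mI x ^ 3, φ (E ^ 2 * a) = 0 := by
      intro a ha
      rw [pow_succ' (mI x) 2] at ha
      refine Submodule.mul_induction_on ha (fun y hy z hz => ?_) (fun y z hy hz => ?_)
      · have : E ^ 2 * (y * z) = y * (E ^ 2 * z) := by ring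
        rw [this, h4 y _ (hEE z hz), (mem_mI _ _).1 hy, zero_mul]
      · rw [mul_add, map_add, hy, hz, add_zero]
    have hEφ : ∀ g ∈ vI S * vI S, φ (E ^ 2 * g) = φ g := fun g hg => by
      rw [h4 _ g hg]; simp [hE1]
    have hsqn : ∀ y ∈ vI S, 0 ≤ φ (y ^ 2) := fun y hy =>
      h1 _ (by rw [pow_two]; exact Ideal.mul_mem_mul hy hy) (h.sq y)
    -- φ F
    have hval : φ F = ∑ i, φ ((E * ∑ a, C (B' i a) * dV x a) ^ 2)
        + c * ∑ a, φ ((E * dV x a) ^ 2) := by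
      rw [← hEφ F hFJ]
      have := hE3 _ hm
      rw [mul_sub, map_sub, sub_eq_zero] at this
      rw [this, mul_add, map_add, Finset.mul_sum, map_sum, ← smul_eq_C_mul, mul_smul_comm,
        map_smul, Finset.mul_sum, map_sum, smul_eq_mul]
      simp only [mul_pow]
    have hz : ∀ a, φ ((E * dV x a) ^ 2) = 0 := by
      have hn1 : ∀ a, 0 ≤ φ ((E * dV x a) ^ 2) := fun a => hsqn _ (hEm _ (dV_mem x a))
      have hn2 : 0 ≤ ∑ i, φ ((E * ∑ a, C (B' i a) * dV x a) ^ 2) :=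
        Finset.sum_nonneg fun i _ => hsqn _ (hEm _ (Ideal.sum_mem _ fun a _ =>
          Ideal.mul_mem_left _ _ (dV_mem x a)))
      have hs : ∑ a, φ ((E * dV x a) ^ 2) = 0 := by
        apply le_antisymm _ (Finset.sum_nonneg fun a _ => hn1 a)
        by_contra hh
        push Not at hh
        have := mul_pos hc hh
        linarith
      intro a
      exact (Finset.sum_eq_zero_iff_of_nonneg (fun a _ => hn1 a)).1 hs a (Finset.mem_univ a)
    have hspan : ∀ b ∈ mI x, φ ((E * b) ^ 2) = 0 := by
      intro b hb
      have hb' := hb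
      rw [mI_eq_span] at hb'
      induction hb' using Submodule.span_induction with
      | mem y hy => obtain ⟨a, rfl⟩ := hy; exact hz a
      | zero => simp
      | add y z hy hz' ihy ihz =>
        rw [← Ideal.span, ← mI_eq_span] at hy hz'
        have e : (E * (y + z)) ^ 2 + (E * (y - z)) ^ 2 = (2:ℝ) • ((E * y) ^ 2) + (2:ℝ) • ((E * z) ^ 2) := by
          simp only [smul_eq_C_mul]
          have : (C 2 : RPoly n) = 2 := map_ofNat C 2
          rw [this]; ring
        have e' := congrArg φ e
        rw [map_add, map_add, map_smul, map_smul, ihy hy, ihz hz'] at e'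
        have n1 := hsqn _ (hEm _ (Ideal.add_mem _ hy hz'))
        have n2 := hsqn _ (hEm _ (Ideal.sub_mem _ hy hz'))
        simp only [smul_zero, add_zero] at e'
        linarith
      | smul q y hy ihy =>
        rw [← Ideal.span, ← mI_eq_span] at hy
        have : (E * q • y) ^ 2 = q ^ 2 * ((E * y) ^ 2) := by rw [smul_eq_mul]; ring
        rw [this, h4 _ _ (by rw [pow_two]; exact Ideal.mul_mem_mul (hEm _ hy) (hEm _ hy)), ihy hy,
          mul_zero]
    have : φ θ = 0 := by
      rw [← hEφ θ hθJ, hθdef, Finset.mul_sum, map_sum]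
      apply Finset.sum_eq_zero
      intro b hb
      rw [← mul_pow]
      exact hspan b ((mem_mI _ _).2 ((mem_vI S b).1 (hBI b hb) x hxS))
    rw [h2] at this
    exact one_ne_zero this
  · have hFx := hpos x hxS hx
    have e1 := h4 θ F hFJ
    have e2 := h4 F θ hθJ
    rw [mul_comm F θ, h2, mul_one, e1] at e2
    have hθx := hx θ hθQ
    nlinarith

open MvPolynomial

section

theorem taylor1 {n : ℕ} (u : Fin n → ℝ) (p : RPoly n) :
    p - (C (eval u p) + ∑ a, C (eval u (pderiv a p)) * dV u a) ∈ mI u ^ 2 := by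
  classical
  induction p using MvPolynomial.induction_on with
  | C r => simp
  | add p q hp hq =>
    convert Ideal.add_mem _ hp hq using 1
    simp only [map_add, add_mul, Finset.sum_add_distrib]; ring
  | mul_X p i hp =>
    have h1 := Ideal.mul_mem_left _ (X i) hp
    have h2 : ∑ a, C (eval u (pderiv a p)) * (dV u a * dV u i) ∈ mI u ^ 2 :=
      Ideal.sum_mem _ fun a _ => Ideal.mul_mem_left _ _ (by
        rw [pow_two]; exact Ideal.mul_mem_mul (dV_mem u a) (dV_mem u i))
    convert Ideal.add_mem _ h1 h2 using 1
    have e : ∀ a, C (eval u (pderiv a (p * X i))) * dV u a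
        = C (u i) * (C (eval u (pderiv a p)) * dV u a)
          + (if a = i then C (eval u p) * dV u i else 0) := by
      intro a
      rw [pderiv_mul, pderiv_X]
      by_cases h : a = i
      · subst h; simp [add_mul]; ring
      · have : Pi.single (M := fun _ => RPoly n) a 1 i = 0 := Pi.single_eq_of_ne (Ne.symm h) _
        simp [h, this]; ring
    simp only [e, Finset.sum_add_distrib, Finset.sum_ite_eq', Finset.mem_univ, if_true,
      ← Finset.mul_sum]
    have e2 : ∑ a, C (eval u (pderiv a p)) * (dV u a * dV u i)
        = dV u i * ∑ a, C (eval u (pderiv a p)) * dV u a := by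
      rw [Finset.mul_sum]; exact Finset.sum_congr rfl fun a _ => by ring
    rw [e2]
    simp only [map_mul, eval_X, dV]
    ring

theorem taylor2 {n : ℕ} (u : Fin n → ℝ) (p : RPoly n) :
    p - (C (eval u p) + ∑ a, C (eval u (pderiv a p)) * dV u a
      + ∑ a, ∑ b, C (2⁻¹ * eval u (pderiv a (pderiv b p))) * (dV u a * dV u b)) ∈ mI u ^ 3 := by
  classical
  induction p using MvPolynomial.induction_on with
  | C r => simp
  | add p q hp hq =>
    convert Ideal.add_mem _ hp hq using 1
    simp only [map_add, add_mul, mul_add, Finset.sum_add_distrib]; ring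
  | mul_X p i hp =>
    have h1 := Ideal.mul_mem_left _ (X i) hp
    have h2 : (∑ a, ∑ b, C (2⁻¹ * eval u (pderiv a (pderiv b p))) * (dV u a * dV u b)) * dV u i
        ∈ mI u ^ 3 := by
      rw [pow_succ]
      refine Ideal.mul_mem_mul (Ideal.sum_mem _ fun a _ => Ideal.sum_mem _ fun b _ =>
        Ideal.mul_mem_left _ _ ?_) (dV_mem u i)
      rw [pow_two]; exact Ideal.mul_mem_mul (dV_mem u a) (dV_mem u b)
    convert Ideal.add_mem _ h1 h2 using 1
    have s0 : ∀ a, (Pi.single (M := fun _ => RPoly n) a 1 i : RPoly n) = if a = i then 1 else 0 := by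
      intro a
      by_cases h : a = i
      · subst h; simp
      · rw [if_neg h]; exact Pi.single_eq_of_ne (Ne.symm h) _
    have e : ∀ a, C (eval u (pderiv a (p * X i))) * dV u a
        = C (u i) * (C (eval u (pderiv a p)) * dV u a)
          + (if a = i then C (eval u p) * dV u i else 0) := by
      intro a
      rw [pderiv_mul, pderiv_X, s0]
      by_cases h : a = i
      · subst h; simp [add_mul]; ring
      · simp [h]; ring
    have e3 : ∀ a b, C (2⁻¹ * eval u (pderiv a (pderiv b (p * X i)))) * (dV u a * dV u b)
        = C (u i) * (C (2⁻¹ * eval u (pderiv a (pderiv b p))) * (dV u a * dV u b))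
          + (if a = i then C 2⁻¹ * (dV u i * (C (eval u (pderiv b p)) * dV u b)) else 0)
          + (if b = i then C 2⁻¹ * (dV u i * (C (eval u (pderiv a p)) * dV u a)) else 0) := by
      intro a b
      rw [pderiv_mul, pderiv_X, s0, map_add, pderiv_mul, pderiv_X, s0]
      by_cases h : a = i <;> by_cases h' : b = i
      · subst h; subst h'; simp [add_mul, mul_add]; ring
      · subst h; simp [h', add_mul, mul_add]; ring
      · subst h'; simp [h, add_mul, mul_add]; ring
      · simp [h, h']; ring
    have h22 : (C 2⁻¹ : RPoly n) * 2 = 1 := by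
      have : (2 : RPoly n) = C 2 := (map_ofNat C 2).symm
      rw [this, ← C_mul]; norm_num
    simp only [e, e3, Finset.sum_add_distrib, Finset.sum_ite_eq', Finset.mem_univ, if_true,
      ← Finset.mul_sum, Finset.sum_ite_irrel, Finset.sum_const_zero]
    set T1 := ∑ a, C (eval u (pderiv a p)) * dV u a
    set T2 := ∑ a, ∑ b, C (2⁻¹ * eval u (pderiv a (pderiv b p))) * (dV u a * dV u b)
    simp only [map_mul, eval_X, dV]
    linear_combination (-(X i - C (u i)) * T1) * h22

theorem quad_coercive {n : ℕ} (q : (Fin n → ℝ) → ℝ) (hq : Continuous q)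
    (hom : ∀ (t : ℝ) v, q (t • v) = t ^ 2 * q v) (hpos : ∀ v, v ≠ 0 → 0 < q v) :
    ∃ c : ℝ, 0 < c ∧ ∀ v, c * ∑ a, v a ^ 2 ≤ q v := by
  have hne : ∀ v : Fin n → ℝ, ∑ a, v a ^ 2 = 1 → v ≠ 0 := by
    rintro v h rfl; simp at h
  have hT : IsCompact {v : Fin n → ℝ | ∑ a, v a ^ 2 = 1} := by
    refine (isCompact_univ_pi (fun _ : Fin n => isCompact_Icc (a := (-1:ℝ)) (b := 1))).of_isClosed_subset
      (isClosed_eq (by fun_prop) continuous_const) ?_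
    intro v hv i _
    have : v i ^ 2 ≤ 1 := by
      rw [← hv.out]
      exact Finset.single_le_sum (f := fun a => v a ^ 2) (fun a _ => sq_nonneg _) (Finset.mem_univ i)
    exact abs_le.1 (abs_le_one_iff_mul_self_le_one.2 (by nlinarith))
  obtain ⟨c, hc, hcT⟩ : ∃ c : ℝ, 0 < c ∧ ∀ v : Fin n → ℝ, ∑ a, v a ^ 2 = 1 → c ≤ q v := by
    by_cases hemp : {v : Fin n → ℝ | ∑ a, v a ^ 2 = 1}.Nonempty
    · obtain ⟨v0, hv0, hmin⟩ := hT.exists_isMinOn hemp hq.continuousOn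
      exact ⟨q v0, hpos _ (hne _ hv0), fun v hv => hmin hv⟩
    · exact ⟨1, one_pos, fun v hv => absurd ⟨v, hv⟩ hemp⟩
  refine ⟨c, hc, fun v => ?_⟩
  by_cases hv : v = 0
  · subst hv
    have := hom 0 0
    simp at this; simp [this]
  have hs : 0 < ∑ a, v a ^ 2 := by
    obtain ⟨i, hi⟩ := Function.ne_iff.1 hv
    exact Finset.sum_pos' (fun a _ => sq_nonneg _) ⟨i, Finset.mem_univ i, by
      have : v i ≠ 0 := hi
      positivity⟩
  set s := ∑ a, v a ^ 2 with hsdef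
  have h1 := hcT ((Real.sqrt s)⁻¹ • v) (by
    simp only [Pi.smul_apply, smul_eq_mul, mul_pow, ← Finset.mul_sum]
    rw [← hsdef, inv_pow, Real.sq_sqrt hs.le, inv_mul_cancel₀ hs.ne'])
  rw [hom, inv_pow, Real.sq_sqrt hs.le] at h1
  rw [inv_mul_eq_div, le_div_iff₀ hs] at h1
  exact h1

theorem finsler {n : ℕ} (q r : (Fin n → ℝ) → ℝ) (hq : Continuous q) (hr : Continuous r)
    (homq : ∀ (t : ℝ) v, q (t • v) = t ^ 2 * q v) (homr : ∀ (t : ℝ) v, r (t • v) = t ^ 2 * r v)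
    (hr0 : ∀ v, 0 ≤ r v) (hpos : ∀ v, v ≠ 0 → r v = 0 → 0 < q v) :
    ∃ A : ℝ, 0 ≤ A ∧ ∀ v, v ≠ 0 → 0 < q v + A * r v := by
  by_contra hcon
  push Not at hcon
  -- on the sphere
  have hT : IsCompact (Metric.sphere (0 : Fin n → ℝ) 1) := isCompact_sphere 0 1
  have hP : IsCompact (Metric.sphere (0 : Fin n → ℝ) 1 ∩ {v | q v ≤ 0}) :=
    hT.inter_right (isClosed_le hq continuous_const)
  have hnz : ∀ v ∈ Metric.sphere (0 : Fin n → ℝ) 1, v ≠ 0 := by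
    rintro v hv rfl; simp at hv
  obtain ⟨δ, hδ, hδP⟩ : ∃ δ : ℝ, 0 < δ ∧
      ∀ v ∈ Metric.sphere (0 : Fin n → ℝ) 1 ∩ {v | q v ≤ 0}, δ ≤ r v := by
    by_cases hemp : (Metric.sphere (0 : Fin n → ℝ) 1 ∩ {v | q v ≤ 0}).Nonempty
    · obtain ⟨v0, hv0, hmin⟩ := hP.exists_isMinOn hemp hr.continuousOn
      refine ⟨r v0, ?_, fun v hv => hmin hv⟩
      rcases (hr0 v0).eq_or_lt with h | h
      · exact absurd (hpos v0 (hnz v0 hv0.1) h.symm) (not_lt.2 hv0.2)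
      · exact h
    · exact ⟨1, one_pos, fun v hv => absurd ⟨v, hv⟩ hemp⟩
  obtain ⟨M, hM⟩ := hT.exists_bound_of_continuousOn hq.continuousOn
  obtain ⟨v, hv, hle⟩ := hcon ((|M| + 1) / δ) (by positivity)
  have hn : 0 < ‖v‖ := norm_pos_iff.2 hv
  have hv1 : ‖v‖⁻¹ • v ∈ Metric.sphere (0 : Fin n → ℝ) 1 := by
    simp [norm_smul, hn.ne']
  have h1 : q (‖v‖⁻¹ • v) + (|M| + 1) / δ * r (‖v‖⁻¹ • v) ≤ 0 := by
    rw [homq, homr]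
    have : 0 < ‖v‖⁻¹ ^ 2 := by positivity
    nlinarith
  have h2 : q (‖v‖⁻¹ • v) ≤ 0 := by
    have := hr0 (‖v‖⁻¹ • v)
    have : 0 ≤ (|M| + 1) / δ * r (‖v‖⁻¹ • v) := by positivity
    linarith
  have h3 := hδP _ ⟨hv1, h2⟩
  have h4 := hM _ hv1
  rw [Real.norm_eq_abs] at h4
  have h5 : (|M| + 1) / δ * δ ≤ (|M| + 1) / δ * r (‖v‖⁻¹ • v) := by gcongr
  rw [div_mul_cancel₀ _ hδ.ne'] at h5
  linarith [neg_abs_le (q (‖v‖⁻¹ • v)), le_abs_self M]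

open scoped MatrixOrder in
theorem locPD_of_quad {n : ℕ} (F : RPoly n) (u : Fin n → ℝ) (M : Fin n → Fin n → ℝ)
    (hF : F - ∑ a, ∑ b, C (M a b) * (dV u a * dV u b) ∈ mI u ^ 3)
    (hM : ∀ v : Fin n → ℝ, v ≠ 0 → 0 < ∑ a, ∑ b, v a * M a b * v b) : LocPD F u := by
  classical
  obtain ⟨c, hc, hcM⟩ := quad_coercive (fun v : Fin n → ℝ => ∑ a, ∑ b, v a * M a b * v b)
    (by fun_prop) (fun t v => by
      simp only [Pi.smul_apply, smul_eq_mul, Finset.mul_sum]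
      exact Finset.sum_congr rfl fun a _ => Finset.sum_congr rfl fun b _ => by ring) hM
  let H : Matrix (Fin n) (Fin n) ℝ :=
    Matrix.of fun a b => 2⁻¹ * (M a b + M b a) - if a = b then c else 0
  have hH : H.PosSemidef := by
    refine Matrix.PosSemidef.of_dotProduct_mulVec_nonneg ?_ ?_
    · ext a b
      simp only [H, Matrix.conjTranspose_apply, Matrix.of_apply, star_trivial, eq_comm (a := a)]
      ring
    · intro v
      have h1 : star v ⬝ᵥ H.mulVec v = ∑ a, ∑ b, v a * M a b * v b - c * ∑ a, v a ^ 2 := by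
        have e1 : ∑ a, ∑ b, v a * M a b * v b = ∑ a, ∑ b, v a * M b a * v b := by
          rw [Finset.sum_comm]
          exact Finset.sum_congr rfl fun a _ => Finset.sum_congr rfl fun b _ => by ring
        have e2 : star v ⬝ᵥ H.mulVec v = 2⁻¹ * ∑ a, ∑ b, v a * M a b * v b
            + 2⁻¹ * ∑ a, ∑ b, v a * M b a * v b - c * ∑ a, v a ^ 2 := by
          simp only [dotProduct, Matrix.mulVec, H, Matrix.of_apply, star_trivial,
            Finset.mul_sum, ← Finset.sum_add_distrib, ← Finset.sum_sub_distrib]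
          refine Finset.sum_congr rfl fun a _ => ?_
          have : c * v a ^ 2 = ∑ b, if a = b then c * v a * v b else 0 := by
            simp; ring
          rw [this, ← Finset.sum_sub_distrib]
          refine Finset.sum_congr rfl fun b _ => ?_
          by_cases h : a = b
          · simp [h]; ring
          · simp [h]; ring
        rw [e2, ← e1]; ring
      rw [h1]
      have := hcM v
      linarith
  obtain ⟨B, hB⟩ := CStarAlgebra.nonneg_iff_eq_star_mul_self.mp hH.nonneg
  refine ⟨n, fun i a => B i a, c, hc, ?_⟩
  convert hF using 2
  have hent : ∀ a b, H a b = ∑ i, B i a * B i b := by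
    intro a b
    rw [hB, Matrix.star_eq_conjTranspose, Matrix.mul_apply]
    simp
  have e1 : ∑ a, ∑ b, C (M a b) * (dV u a * dV u b)
      = ∑ a, ∑ b, C (2⁻¹ * (M a b + M b a)) * (dV u a * dV u b) := by
    have e0 : ∑ a, ∑ b, C (M a b) * (dV u a * dV u b) = ∑ a, ∑ b, C (M b a) * (dV u a * dV u b) := by
      rw [Finset.sum_comm]
      exact Finset.sum_congr rfl fun a _ => Finset.sum_congr rfl fun b _ => by ring
    have h22 : (C 2⁻¹ : RPoly n) * 2 = 1 := by
      have : (2 : RPoly n) = C 2 := (map_ofNat C 2).symm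
      rw [this, ← C_mul]; norm_num
    have e3 : ∑ a, ∑ b, C (2⁻¹ * (M a b + M b a)) * (dV u a * dV u b)
        = C 2⁻¹ * (∑ a, ∑ b, C (M a b) * (dV u a * dV u b)
          + ∑ a, ∑ b, C (M b a) * (dV u a * dV u b)) := by
      simp only [← Finset.sum_add_distrib, Finset.mul_sum]
      exact Finset.sum_congr rfl fun a _ => Finset.sum_congr rfl fun b _ => by
        simp only [C_mul, C_add]; ring
    rw [e3, ← e0]
    linear_combination (-(∑ a, ∑ b, C (M a b) * (dV u a * dV u b))) * h22
  have e2 : ∀ a b, 2⁻¹ * (M a b + M b a) = ∑ i, B i a * B i b + if a = b then c else 0 := by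
    intro a b
    rw [← hent]; simp [H]
  rw [e1]
  simp only [e2, C_add, add_mul, Finset.sum_add_distrib]
  congr 1
  · simp only [map_sum, C_mul, pow_two, Finset.sum_mul_sum, Finset.sum_mul]
    rw [Finset.sum_comm]
    refine Finset.sum_congr rfl fun a _ => ?_
    rw [Finset.sum_comm]
    refine Finset.sum_congr rfl fun b _ => ?_
    first
    | exact Finset.sum_congr rfl fun i _ => by ring
    | (rw [Finset.mul_sum]; exact Finset.sum_congr rfl fun x _ => by ring)
    | (rw [Finset.mul_sum, Finset.sum_comm]; exact Finset.sum_congr rfl fun x _ => by ring)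
  · rw [Finset.mul_sum]
    refine Finset.sum_congr rfl fun a _ => ?_
    rw [Finset.sum_eq_single a]
    · rw [if_pos rfl]; ring
    · intro b _ hb; simp [Ne.symm hb]
    · simp

open Asymptotics Topology in
theorem mI_pow_isBigO {n : ℕ} (u : Fin n → ℝ) (k : ℕ) (p : RPoly n) (hp : p ∈ mI u ^ k) :
    (fun x => eval x p) =O[𝓝 u] (fun x => ‖x - u‖ ^ k) := by
  have hc : ∀ p : RPoly n, (fun x => eval x p) =O[𝓝 u] (fun _ => (1:ℝ)) := fun p =>
    (MvPolynomial.continuous_eval p).continuousAt.isBigO_one ℝ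
  have h1 : ∀ p ∈ mI u, (fun x => eval x p) =O[𝓝 u] (fun x => ‖x - u‖) := by
    intro p hp
    rw [mI_eq_span] at hp
    induction hp using Submodule.span_induction with
    | mem y hy =>
      obtain ⟨a, rfl⟩ := hy
      refine IsBigO.of_bound 1 (Filter.Eventually.of_forall fun x => ?_)
      simp only [dV, map_sub, eval_X, eval_C, one_mul, norm_norm]
      exact norm_le_pi_norm (x - u) a
    | zero => simp only [map_zero]; exact isBigO_zero _ _
    | add y z _ _ hy hz => simp only [map_add]; exact hy.add hz
    | smul q y _ hy =>
      simp only [smul_eq_mul, map_mul]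
      simpa using (hc q).mul hy
  induction k generalizing p with
  | zero => simpa using hc p
  | succ k ih =>
    rw [pow_succ] at hp
    refine Submodule.mul_induction_on hp (fun y hy z hz => ?_) (fun y z hy hz => ?_)
    · simp only [map_mul, pow_succ]
      exact (ih y hy).mul (h1 z hz)
    · simp only [map_add]; exact hy.add hz

open Asymptotics Topology in
theorem LocPD.eventually_pos {n : ℕ} {F : RPoly n} {u : Fin n → ℝ} (h : LocPD F u) :
    ∀ᶠ x in 𝓝 u, x ≠ u → 0 < eval x F := by
  obtain ⟨m, B, c, hc, hm⟩ := h
  obtain ⟨K, hK⟩ := (mI_pow_isBigO u 3 _ hm).bound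
  have hsmall : ∀ᶠ x in 𝓝 u, |K| * ‖x - u‖ < c := by
    have : Filter.Tendsto (fun x : Fin n → ℝ => |K| * ‖x - u‖) (𝓝 u) (𝓝 (|K| * ‖u - u‖)) :=
      Continuous.tendsto (by fun_prop) u
    rw [sub_self, norm_zero, mul_zero] at this
    exact this.eventually_lt_const hc
  filter_upwards [hK, hsmall] with x h1 h2 hx
  have hd : 0 < ‖x - u‖ := norm_pos_iff.2 (sub_ne_zero.2 hx)
  have hs : ‖x - u‖ ^ 2 ≤ ∑ a, (x a - u a) ^ 2 := by
    have : ‖x - u‖ ≤ Real.sqrt (∑ a, (x a - u a) ^ 2) := by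
      rw [pi_norm_le_iff_of_nonneg (Real.sqrt_nonneg _)]
      intro i
      rw [Real.norm_eq_abs]
      apply Real.abs_le_sqrt
      exact Finset.single_le_sum (f := fun a => (x a - u a) ^ 2) (fun a _ => sq_nonneg _)
        (Finset.mem_univ i)
    calc ‖x - u‖ ^ 2 ≤ Real.sqrt (∑ a, (x a - u a) ^ 2) ^ 2 := by gcongr
      _ = _ := Real.sq_sqrt (Finset.sum_nonneg fun a _ => sq_nonneg _)
  rw [Real.norm_eq_abs, norm_pow, norm_norm, map_sub, map_add, map_sum, map_mul, eval_C, map_sum] at h1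
  simp only [map_pow, dV, map_sub, eval_X, eval_C] at h1
  have hB : 0 ≤ ∑ i, (eval x (∑ a, C (B i a) * (X a - C (u a)))) ^ 2 :=
    Finset.sum_nonneg fun i _ => sq_nonneg _
  have h3 := (abs_le.1 h1).1
  have h4 : K * ‖x - u‖ ^ 3 ≤ |K| * ‖x - u‖ * ‖x - u‖ ^ 2 := by
    have : K * ‖x - u‖ ^ 3 ≤ |K| * ‖x - u‖ ^ 3 := by gcongr; exact le_abs_self K
    linarith [show |K| * ‖x - u‖ ^ 3 = |K| * ‖x - u‖ * ‖x - u‖ ^ 2 by ring]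
  have h5 : |K| * ‖x - u‖ * ‖x - u‖ ^ 2 < c * ‖x - u‖ ^ 2 := by gcongr
  have h6 : c * ‖x - u‖ ^ 2 ≤ c * ∑ a, (x a - u a) ^ 2 := by gcongr
  linarith

end

open MvPolynomial

section

theorem quad_poly_sum {n : ℕ} (u : Fin n → ℝ) (J : Finset ℕ) (A : ℝ) (D : ℕ → Fin n → ℝ) :
    ∑ a, ∑ b, C (∑ j ∈ J, A * (D j a * D j b)) * (dV u a * dV u b)
      = ∑ j ∈ J, C A * (∑ a, C (D j a) * dV u a) ^ 2 := by
  simp only [map_sum, C_mul, Finset.sum_mul]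
  have : ∀ a, (∑ b, ∑ j ∈ J, C A * (C (D j a) * C (D j b)) * (dV u a * dV u b))
      = ∑ j ∈ J, ∑ b, C A * (C (D j a) * C (D j b)) * (dV u a * dV u b) :=
    fun a => Finset.sum_comm
  simp only [this]
  rw [Finset.sum_comm]
  refine Finset.sum_congr rfl fun j _ => ?_
  rw [pow_two, Finset.sum_mul_sum, Finset.mul_sum]
  refine Finset.sum_congr rfl fun a _ => ?_
  rw [Finset.mul_sum]
  exact Finset.sum_congr rfl fun b _ => by ring

theorem quad_form_sum {n : ℕ} (v : Fin n → ℝ) (J : Finset ℕ) (A : ℝ) (D : ℕ → Fin n → ℝ) :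
    ∑ a, ∑ b, v a * (∑ j ∈ J, A * (D j a * D j b)) * v b
      = A * ∑ j ∈ J, (∑ a, v a * D j a) ^ 2 := by
  simp only [Finset.mul_sum, Finset.sum_mul]
  have : ∀ a, (∑ b, ∑ j ∈ J, v a * (A * (D j a * D j b)) * v b)
      = ∑ j ∈ J, ∑ b, v a * (A * (D j a * D j b)) * v b :=
    fun a => Finset.sum_comm
  simp only [this]
  rw [Finset.sum_comm]
  refine Finset.sum_congr rfl fun j _ => ?_
  rw [pow_two, Finset.sum_mul_sum, Finset.mul_sum]
  refine Finset.sum_congr rfl fun a _ => ?_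
  rw [Finset.mul_sum]
  exact Finset.sum_congr rfl fun b _ => by ring

theorem sq_sub_lin_mem {n : ℕ} (u : Fin n → ℝ) (p : RPoly n) (hp : eval u p = 0) :
    p ^ 2 - (∑ a, C (eval u (pderiv a p)) * dV u a) ^ 2 ∈ mI u ^ 3 := by
  have h1 := taylor1 u p
  rw [hp, C_0, zero_add] at h1
  have h2 : p + ∑ a, C (eval u (pderiv a p)) * dV u a ∈ mI u :=
    Ideal.add_mem _ ((mem_mI _ _).2 hp) (Ideal.sum_mem _ fun a _ => Ideal.mul_mem_left _ _ (dV_mem u a))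
  have := Ideal.mul_mem_mul h1 h2
  rw [← pow_succ] at this
  convert this using 1
  ring

theorem local_cert {n : ℕ} (E I : Finset ℕ) (c : ℕ → RPoly n) (f : RPoly n) (u : Fin n → ℝ)
    (hu : u ∈ Kset E I c) (hopt : OptCondsAt E c I c f u) :
    ∃ s φ : ℕ → RPoly n, (∀ j ∈ I, eval u (c j) ≠ 0 → s j = 0) ∧
      LocPD (f - C (eval u f) - ∑ j ∈ I, c j * s j ^ 2 - ∑ j ∈ E, c j * φ j) u := by
  classical
  obtain ⟨-, lam, mu, hkkt, hcomp, hscc, hsosc⟩ := hopt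
  set J := I.filter (fun j => eval u (c j) = 0) with hJ
  have hmu0 : ∀ j ∈ I, eval u (c j) ≠ 0 → mu j = 0 := fun j hj h =>
    (mul_eq_zero.1 (hcomp j hj).2).resolve_right h
  have hmupos : ∀ j ∈ J, 0 < mu j := by
    intro j hj
    rw [hJ, Finset.mem_filter] at hj
    have := hscc j hj.1
    rwa [hj.2, add_zero] at this
  set D : ℕ → Fin n → ℝ := fun j a => eval u (pderiv a (c j)) with hD
  set L : RPoly n := f - C (eval u f) - ∑ j ∈ E, C (lam j) * c j - ∑ j ∈ I, C (mu j) * c j with hL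
  have hLpd : ∀ a, pderiv a L = pderiv a f - ∑ j ∈ E, C (lam j) * pderiv a (c j)
      - ∑ j ∈ I, C (mu j) * pderiv a (c j) := by
    intro a
    simp only [hL, map_sub, map_sum, pderiv_C, pderiv_C_mul, sub_zero]
  have hLval : eval u L = 0 := by
    have h1 : ∑ j ∈ E, lam j * eval u (c j) = 0 :=
      Finset.sum_eq_zero fun j hj => by rw [hu.1 j hj, mul_zero]
    have h2 : ∑ j ∈ I, mu j * eval u (c j) = 0 :=
      Finset.sum_eq_zero fun j hj => (hcomp j hj).2
    simp only [hL, map_sub, map_sum, eval_C, map_mul, h1, h2]; ring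
  have hLgrad : ∀ a, eval u (pderiv a L) = 0 := by
    intro a
    have h := congrFun hkkt a
    simp only [gradP, Pi.add_apply, Finset.sum_apply, Pi.smul_apply, smul_eq_mul] at h
    rw [hLpd]
    simp only [map_sub, map_sum, map_mul, eval_C]
    rw [h]; ring
  have hLhess : ∀ a b, eval u (pderiv a (pderiv b L)) =
      (hessP f u a b - ∑ j ∈ E, lam j * hessP (c j) u a b)
          - ∑ j ∈ I, mu j * hessP (c j) u a b := by
    intro a b
    rw [hLpd]
    simp only [map_sub, map_sum, map_mul, eval_C, pderiv_C_mul, hessP]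
  set Hs : Fin n → Fin n → ℝ := fun a b => eval u (pderiv a (pderiv b L)) with hHs
  obtain ⟨A, hA, hApos⟩ := finsler (fun v : Fin n → ℝ => ∑ a, ∑ b, v a * (2⁻¹ * Hs a b) * v b)
    (fun v => ∑ j ∈ E, (∑ a, v a * D j a) ^ 2 + ∑ j ∈ J, (∑ a, v a * D j a) ^ 2)
    (by fun_prop) (by fun_prop)
    (fun t v => by
      simp only [Pi.smul_apply, smul_eq_mul, Finset.mul_sum]
      exact Finset.sum_congr rfl fun a _ => Finset.sum_congr rfl fun b _ => by ring)
    (fun t v => by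
      simp only [Pi.smul_apply, smul_eq_mul, mul_assoc, ← Finset.mul_sum, mul_pow, mul_add])
    (fun v => by positivity)
    (fun v hv hr => by
      have hn1 : 0 ≤ ∑ j ∈ E, (∑ a, v a * D j a) ^ 2 := by positivity
      have hn2 : 0 ≤ ∑ j ∈ J, (∑ a, v a * D j a) ^ 2 := by positivity
      have z1 : ∑ j ∈ E, (∑ a, v a * D j a) ^ 2 = 0 := by linarith
      have z2 : ∑ j ∈ J, (∑ a, v a * D j a) ^ 2 = 0 := by linarith
      rw [Finset.sum_eq_zero_iff_of_nonneg (fun _ _ => sq_nonneg _)] at z1 z2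
      have := hsosc v hv (fun j hj => pow_eq_zero_iff (two_ne_zero) |>.1 (z1 j hj))
        (fun j hj h0 => pow_eq_zero_iff (two_ne_zero) |>.1 <| z2 j (by rw [hJ]; exact Finset.mem_filter.2 ⟨hj, h0⟩))
      simp only [← hLhess] at this
      have e : ∑ a, ∑ b, v a * (2⁻¹ * Hs a b) * v b = 2⁻¹ * ∑ a, ∑ b, v a * Hs a b * v b := by
        simp only [Finset.mul_sum]
        exact Finset.sum_congr rfl fun a _ => Finset.sum_congr rfl fun b _ => by ring
      rw [e]; positivity)
  refine ⟨fun j => if eval u (c j) = 0 then C (Real.sqrt (mu j)) - C (A / (2 * Real.sqrt (mu j))) * c j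
    else 0, fun j => C (lam j) - C A * c j, fun j _ h => if_neg h, ?_⟩
  refine locPD_of_quad _ u (fun a b => 2⁻¹ * Hs a b + ∑ j ∈ E, A * (D j a * D j b)
    + ∑ j ∈ J, A * (D j a * D j b)) ?_ ?_
  · have t2 := taylor2 u L
    have z : ∑ a, C (eval u (pderiv a L)) * dV u a = 0 :=
      Finset.sum_eq_zero fun a _ => by rw [hLgrad, C_0, zero_mul]
    rw [hLval, z, C_0, zero_add, zero_add] at t2
    have m1 : ∑ j ∈ E, C A * (c j ^ 2 - (∑ a, C (D j a) * dV u a) ^ 2) ∈ mI u ^ 3 :=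
      Ideal.sum_mem _ fun j hj => Ideal.mul_mem_left _ _ (sq_sub_lin_mem u _ (hu.1 j hj))
    have m2 : ∑ j ∈ J, C A * (c j ^ 2 - (∑ a, C (D j a) * dV u a) ^ 2) ∈ mI u ^ 3 :=
      Ideal.sum_mem _ fun j hj => Ideal.mul_mem_left _ _
        (sq_sub_lin_mem u _ (Finset.mem_filter.1 hj).2)
    have m3 : ∑ j ∈ J, C (A / (2 * Real.sqrt (mu j))) ^ 2 * c j ^ 3 ∈ mI u ^ 3 :=
      Ideal.sum_mem _ fun j hj => Ideal.mul_mem_left _ _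
        (Ideal.pow_mem_pow ((mem_mI _ _).2 (Finset.mem_filter.1 hj).2) 3)
    have m := Ideal.sub_mem _ (Ideal.add_mem _ (Ideal.add_mem _ t2 m1) m2) m3
    convert m using 1
    simp only [C_add, add_mul, Finset.sum_add_distrib, quad_poly_sum]
    have eI : ∑ j ∈ I, c j * (if eval u (c j) = 0 then
          C (Real.sqrt (mu j)) - C (A / (2 * Real.sqrt (mu j))) * c j else 0) ^ 2
        = ∑ j ∈ I, C (mu j) * c j - ∑ j ∈ J, C A * c j ^ 2
          + ∑ j ∈ J, C (A / (2 * Real.sqrt (mu j))) ^ 2 * c j ^ 3 := by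
      rw [hJ, Finset.sum_filter, Finset.sum_filter, ← Finset.sum_sub_distrib,
        ← Finset.sum_add_distrib]
      refine Finset.sum_congr rfl fun j hj => ?_
      by_cases h : eval u (c j) = 0
      · simp only [h, if_true]
        have hm : 0 < mu j := hmupos j (by rw [hJ]; exact Finset.mem_filter.2 ⟨hj, h⟩)
        have hsq : Real.sqrt (mu j) * Real.sqrt (mu j) = mu j := Real.mul_self_sqrt hm.le
        have hs0 : Real.sqrt (mu j) ≠ 0 := (Real.sqrt_pos.2 hm).ne'
        have e1 : (C (mu j) : RPoly n) = C (Real.sqrt (mu j)) * C (Real.sqrt (mu j)) := by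
          rw [← C_mul, hsq]
        have e2 : (C A : RPoly n) = 2 * (C (Real.sqrt (mu j)) * C (A / (2 * Real.sqrt (mu j)))) := by
          have : (2 : RPoly n) = C 2 := (map_ofNat C 2).symm
          rw [this, ← C_mul, ← C_mul]
          congr 1; field_simp
        rw [e1, e2]; ring
      · simp [h, hmu0 j hj h]
    have eE : ∑ j ∈ E, c j * (C (lam j) - C A * c j) = ∑ j ∈ E, C (lam j) * c j
        - ∑ j ∈ E, C A * c j ^ 2 := by
      rw [← Finset.sum_sub_distrib]
      exact Finset.sum_congr rfl fun j _ => by ring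
    rw [eI, eE]
    simp only [mul_sub, Finset.sum_sub_distrib, hL]
    ring
  · intro v hv
    have h := hApos v hv
    simp only [mul_add, add_mul, Finset.sum_add_distrib, quad_form_sum] at h ⊢
    linarith

end

open MvPolynomial

section
open Topology

theorem cert_nonneg {n : ℕ} {E I : Finset ℕ} {c : ℕ → RPoly n} {x : Fin n → ℝ}
    (hx : x ∈ Kset E I c) (f : RPoly n) (r : ℝ) (s φ : ℕ → RPoly n) :
    eval x (f - C r - ∑ j ∈ I, c j * s j ^ 2 - ∑ j ∈ E, c j * φ j)
      = eval x f - r - ∑ j ∈ I, eval x (c j) * eval x (s j) ^ 2 := by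
  have h1 : ∑ j ∈ E, eval x (c j) * eval x (φ j) = 0 :=
    Finset.sum_eq_zero fun j hj => by rw [hx.1 j hj, zero_mul]
  simp only [map_sub, map_sum, map_mul, map_pow, eval_C, h1, sub_zero]

theorem sum_nonneg_K {n : ℕ} {E I : Finset ℕ} {c : ℕ → RPoly n} {x : Fin n → ℝ}
    (hx : x ∈ Kset E I c) (s : ℕ → RPoly n) :
    0 ≤ ∑ j ∈ I, eval x (c j) * eval x (s j) ^ 2 :=
  Finset.sum_nonneg fun j hj => mul_nonneg (hx.2 j hj) (sq_nonneg _)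

theorem min_finite {n : ℕ} (E I : Finset ℕ) (c : ℕ → RPoly n) (f : RPoly n)
    (hc : IsCompact (Kset E I c))
    (hloc : ∀ u, (u ∈ Kset E I c ∧ ∀ x ∈ Kset E I c, eval u f ≤ eval x f) →
      ∃ s φ : ℕ → RPoly n,
      LocPD (f - C (eval u f) - ∑ j ∈ I, c j * s j ^ 2 - ∑ j ∈ E, c j * φ j) u) :
    {u | u ∈ Kset E I c ∧ ∀ x ∈ Kset E I c, eval u f ≤ eval x f}.Finite := by
  by_contra hinf
  obtain ⟨x, hx, hacc⟩ := Set.Infinite.exists_accPt_of_subset_isCompact hinf hc (fun y hy => hy.1)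
  have hfr := accPt_iff_frequently.1 hacc
  have hmin : ∀ y ∈ Kset E I c, eval x f ≤ eval y f := by
    intro y hy
    have hcl : IsClosed {z : Fin n → ℝ | eval z f ≤ eval y f} :=
      isClosed_le (MvPolynomial.continuous_eval f) continuous_const
    have : x ∈ closure {z : Fin n → ℝ | eval z f ≤ eval y f} :=
      mem_closure_iff_frequently.2 (hfr.mono fun z hz => hz.2.2 y hy)
    rwa [hcl.closure_eq] at this
  obtain ⟨s, φ, hL⟩ := hloc x ⟨hx, hmin⟩
  obtain ⟨z, ⟨hzx, hz⟩, hpos⟩ := (hfr.and_eventually hL.eventually_pos).exists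
  have h1 := hpos hzx
  rw [cert_nonneg hz.1] at h1
  have h2 := sum_nonneg_K hz.1 s
  have h3 := hz.2 x hx
  linarith

theorem glue_mem {n : ℕ} (S : Finset (Fin n → ℝ)) :
    ∃ P : (Fin n → ℝ) → RPoly n, ∀ g : (Fin n → ℝ) → RPoly n, ∀ u ∈ S,
      ∑ v ∈ S, P v * g v - g u ∈ mI u ^ 2 := by
  classical
  choose L hL1 hL0 using fun u => lagrange_exists u S
  refine ⟨fun u => 3 * L u ^ 2 - 2 * L u ^ 3, fun g u hu => ?_⟩
  rw [← Finset.add_sum_erase _ _ hu]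
  have h1 : (3 * L u ^ 2 - 2 * L u ^ 3) * g u - g u ∈ mI u ^ 2 := by
    have : L u - 1 ∈ mI u := by rw [mem_mI]; simp [hL1]
    have := Ideal.mul_mem_left _ (-(2 * L u + 1) * g u) (Ideal.pow_mem_pow this 2)
    convert this using 1; ring
  have h2 : ∑ v ∈ S.erase u, (3 * L v ^ 2 - 2 * L v ^ 3) * g v ∈ mI u ^ 2 := by
    refine Ideal.sum_mem _ fun v hv => ?_
    have : L v ∈ mI u := by
      rw [mem_mI]; exact hL0 v u hu (Finset.ne_of_mem_erase hv).symm
    have := Ideal.mul_mem_left _ ((3 - 2 * L v) * g v) (Ideal.pow_mem_pow this 2)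
    convert this using 1; ring
  convert Ideal.add_mem _ h1 h2 using 1; ring

theorem global_cert {n : ℕ} (E I : Finset ℕ) (c : ℕ → RPoly n) (f : RPoly n)
    (hc : IsCompact (Kset E I c)) (S : Finset (Fin n → ℝ)) (fm : ℝ)
    (hSK : ∀ u ∈ S, u ∈ Kset E I c) (hSf : ∀ u ∈ S, eval u f = fm)
    (hS : ∀ x ∈ Kset E I c, x ∉ S → fm < eval x f)
    (hloc : ∀ u ∈ S, ∃ s φ : ℕ → RPoly n, (∀ j ∈ I, eval u (c j) ≠ 0 → s j = 0) ∧
      LocPD (f - C (eval u f) - ∑ j ∈ I, c j * s j ^ 2 - ∑ j ∈ E, c j * φ j) u) :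
    ∃ s φ : ℕ → RPoly n,
      (∀ u ∈ S, LocPD (f - C fm - ∑ j ∈ I, c j * s j ^ 2 - ∑ j ∈ E, c j * φ j) u) ∧
      ∀ x ∈ Kset E I c, x ∉ S →
        0 < eval x (f - C fm - ∑ j ∈ I, c j * s j ^ 2 - ∑ j ∈ E, c j * φ j) := by
  classical
  choose! s φ hs hL using hloc
  obtain ⟨P, hP⟩ := glue_mem S
  -- the damping polynomial
  set θ : RPoly n := ∏ u ∈ S, ∑ a, dV u a ^ 2 with hθ
  have hθm : ∀ u ∈ S, θ ∈ mI u ^ 2 := by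
    intro u hu
    refine Ideal.mem_of_dvd _ (Finset.dvd_prod_of_mem _ hu) ?_
    exact Ideal.sum_mem _ fun a _ => Ideal.pow_mem_pow (dV_mem u a) 2
  have hθe : ∀ x, eval x θ = ∏ u ∈ S, ∑ a, (x a - u a) ^ 2 := by
    intro x; simp [hθ, dV, map_prod]
  have hθ0 : ∀ x, 0 ≤ eval x θ := fun x => by
    rw [hθe]; exact Finset.prod_nonneg fun u _ => Finset.sum_nonneg fun a _ => sq_nonneg _
  have hθpos : ∀ x ∉ S, 0 < eval x θ := by
    intro x hx
    rw [hθe]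
    refine Finset.prod_pos fun u hu => ?_
    have hne : x ≠ u := fun h => hx (h ▸ hu)
    obtain ⟨i, hi⟩ := Function.ne_iff.1 hne
    refine Finset.sum_pos' (fun a _ => sq_nonneg _) ⟨i, Finset.mem_univ i, ?_⟩
    have := sub_ne_zero.2 hi
    positivity
  obtain ⟨M0, hM0⟩ := hc.exists_bound_of_continuousOn (MvPolynomial.continuous_eval θ).continuousOn
  set M := |M0| + 1 with hM
  have hMpos : 0 < M := by positivity
  have hθM : ∀ x ∈ Kset E I c, eval x θ ≤ M := fun x hx => by
    have := hM0 x hx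
    rw [Real.norm_eq_abs] at this
    linarith [le_abs_self (eval x θ), le_abs_self M0]
  set e : RPoly n := 1 - C M⁻¹ * θ with he
  have hee : ∀ x, eval x e = 1 - M⁻¹ * eval x θ := fun x => by simp [he]
  have he0 : ∀ x ∈ Kset E I c, 0 ≤ eval x e := fun x hx => by
    rw [hee, sub_nonneg, inv_mul_le_iff₀ hMpos, mul_one]; exact hθM x hx
  have he1 : ∀ x, eval x e ≤ 1 := fun x => by
    rw [hee]; have := hθ0 x
    have : 0 ≤ M⁻¹ * eval x θ := by positivity
    linarith
  have helt : ∀ x ∉ S, eval x e < 1 := fun x hx => by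
    rw [hee]; have := hθpos x hx
    have : 0 < M⁻¹ * eval x θ := by positivity
    linarith
  have hem : ∀ m, ∀ u ∈ S, e ^ m - 1 ∈ mI u ^ 2 := by
    intro m u hu
    have h1 : e - 1 ∈ mI u ^ 2 := by
      have := Ideal.mul_mem_left (mI u ^ 2) (-C M⁻¹) (hθm u hu)
      convert this using 1; rw [he]; ring
    have h2 := sub_dvd_pow_sub_pow e 1 m
    rw [one_pow] at h2
    exact Ideal.mem_of_dvd _ h2 h1
  set S0 : ℕ → RPoly n := fun j => ∑ v ∈ S, P v * s v j with hS0
  set Φ : ℕ → RPoly n := fun j => ∑ v ∈ S, P v * φ v j with hΦ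
  have hlocm : ∀ m, ∀ u ∈ S, LocPD (f - C fm - ∑ j ∈ I, c j * (e ^ m * S0 j) ^ 2
      - ∑ j ∈ E, c j * Φ j) u := by
    intro m u hu
    refine (hL u hu).congr ?_
    have hsj : ∀ j, e ^ m * S0 j - s u j ∈ mI u ^ 2 := by
      intro j
      have h1 := Ideal.mul_mem_left _ (S0 j) (hem m u hu)
      have h2 : S0 j - s u j ∈ mI u ^ 2 := hP (fun v => s v j) u hu
      convert Ideal.add_mem _ h1 h2 using 1; ring
    have m1 : ∑ j ∈ I, c j * ((e ^ m * S0 j) ^ 2 - s u j ^ 2) ∈ mI u ^ 3 := by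
      refine Ideal.sum_mem _ fun j hj => ?_
      by_cases h0 : eval u (c j) = 0
      · have := Ideal.mul_mem_left _ (e ^ m * S0 j + s u j)
          (Ideal.mul_mem_mul (hsj j) ((mem_mI u (c j)).2 h0))
        rw [← pow_succ] at this
        convert this using 1; ring
      · have h := hsj j
        rw [hs u hu j hj h0, sub_zero] at h
        rw [hs u hu j hj h0, zero_pow two_ne_zero, sub_zero]
        have h4 := Ideal.pow_mem_pow h 2
        rw [← pow_mul] at h4
        exact Ideal.mul_mem_left _ _ (Ideal.pow_le_pow_right (by norm_num) h4)
    have m2 : ∑ j ∈ E, c j * (Φ j - φ u j) ∈ mI u ^ 3 := by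
      refine Ideal.sum_mem _ fun j hj => ?_
      have h2 : Φ j - φ u j ∈ mI u ^ 2 := hP (fun v => φ v j) u hu
      have := Ideal.mul_mem_mul h2 ((mem_mI u (c j)).2 ((hSK u hu).1 j hj))
      rw [← pow_succ] at this
      convert this using 1; ring
    have := Ideal.neg_mem_iff _ |>.2 (Ideal.add_mem _ m1 m2)
    convert this using 1
    rw [hSf u hu]
    simp only [mul_sub, Finset.sum_sub_distrib]
    ring
  have hevm : ∀ m, ∀ x ∈ Kset E I c, eval x (f - C fm - ∑ j ∈ I, c j * (e ^ m * S0 j) ^ 2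
      - ∑ j ∈ E, c j * Φ j) = eval x f - fm
        - (eval x e) ^ (2 * m) * ∑ j ∈ I, eval x (c j) * eval x (S0 j) ^ 2 := by
    intro m x hx
    rw [cert_nonneg hx (s := fun j => e ^ m * S0 j), Finset.mul_sum]
    congr 1
    refine Finset.sum_congr rfl fun j _ => ?_
    rw [map_mul, map_pow]; ring
  -- neighbourhoods
  have hnb : ∀ u ∈ S, ∃ U : Set (Fin n → ℝ), IsOpen U ∧ u ∈ U ∧ ∀ x ∈ U, x ≠ u →
      0 < eval x (f - C fm - ∑ j ∈ I, c j * (e ^ 0 * S0 j) ^ 2 - ∑ j ∈ E, c j * Φ j) := by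
    intro u hu
    obtain ⟨U, hU1, hU2, hU3⟩ := eventually_nhds_iff.1 (hlocm 0 u hu).eventually_pos
    exact ⟨U, hU2, hU3, hU1⟩
  choose! U hUo hUm hUp using hnb
  set W := Kset E I c \ ⋃ u ∈ S, U u with hW
  have hWc : IsCompact W := hc.diff (isOpen_biUnion fun u hu => hUo u hu)
  have hWS : ∀ x ∈ W, x ∉ S := fun x hx hxS =>
    hx.2 (Set.mem_biUnion hxS (hUm x hxS))
  obtain ⟨δ, hδ, hδW⟩ := hWc.exists_forall_le' (f := fun x => eval x f - fm) (a := 0)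
    (((MvPolynomial.continuous_eval f).sub continuous_const).continuousOn)
    (fun x hx => sub_pos.2 (hS x hx.1 (hWS x hx)))
  obtain ⟨η, hη, hηW⟩ := hWc.exists_forall_le' (f := fun x => 1 - eval x e) (a := 0)
    ((continuous_const.sub (MvPolynomial.continuous_eval e)).continuousOn)
    (fun x hx => sub_pos.2 (helt x (hWS x hx)))
  obtain ⟨B, hB⟩ := hWc.exists_bound_of_continuousOn
    (f := fun x => ∑ j ∈ I, eval x (c j) * eval x (S0 j) ^ 2)
    (Continuous.continuousOn (continuous_finsetSum _ fun j _ =>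
      (MvPolynomial.continuous_eval _).mul ((MvPolynomial.continuous_eval _).pow 2)))
  set ρ := max 0 (1 - η) with hρ
  have hρ0 : 0 ≤ ρ := le_max_left _ _
  have hρ1 : ρ < 1 := max_lt one_pos (by linarith)
  obtain ⟨m, hm⟩ := exists_pow_lt_of_lt_one (show 0 < δ / (|B| + 1) by positivity) hρ1
  refine ⟨fun j => e ^ m * S0 j, Φ, hlocm m, fun x hx hxS => ?_⟩
  rw [hevm m x hx]
  have hnn := sum_nonneg_K hx S0
  by_cases hxU : x ∈ ⋃ u ∈ S, U u
  · obtain ⟨u, hu, hxu⟩ := Set.mem_iUnion₂.1 hxU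
    have h := hUp u hu x hxu (fun h => hxS (h ▸ hu))
    rw [hevm 0 x hx] at h
    simp only [mul_zero, pow_zero, one_mul] at h
    have := mul_le_of_le_one_left hnn (pow_le_one₀ (n := 2 * m) (he0 x hx) (he1 x))
    linarith
  · have hxW : x ∈ W := ⟨hx, hxU⟩
    have h1 := hδW x hxW
    have h2 := hηW x hxW
    have h3 := hB x hxW
    rw [Real.norm_eq_abs] at h3
    have h4 : eval x e ≤ ρ := le_trans (by linarith) (le_max_right _ _)
    have h5 : eval x e ^ (2 * m) ≤ ρ ^ m :=
      calc eval x e ^ (2 * m) ≤ ρ ^ (2 * m) := pow_le_pow_left₀ (he0 x hx) h4 _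
        _ ≤ ρ ^ m := pow_le_pow_of_le_one hρ0 hρ1.le (by omega)
    have h6 : ∑ j ∈ I, eval x (c j) * eval x (S0 j) ^ 2 ≤ |B| + 1 := by
      linarith [le_abs_self (∑ j ∈ I, eval x (c j) * eval x (S0 j) ^ 2), le_abs_self B]
    have h7 : eval x e ^ (2 * m) * ∑ j ∈ I, eval x (c j) * eval x (S0 j) ^ 2 ≤ ρ ^ m * (|B| + 1) :=
      mul_le_mul h5 h6 hnn (pow_nonneg hρ0 _)
    have h8 : ρ ^ m * (|B| + 1) < δ := by
      rwa [lt_div_iff₀ (by positivity)] at hm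
    linarith

end

open MvPolynomial

section

theorem pairing_eq_sum {n : ℕ} (p : RPoly n) (w : (Fin n →₀ ℕ) → ℝ) (T : Finset (Fin n →₀ ℕ))
    (hT : p.support ⊆ T) : pairing p w = ∑ α ∈ T, p.coeff α * w α := by
  unfold pairing
  refine Finset.sum_subset hT fun α _ h => ?_
  rw [notMem_support_iff.1 h, zero_mul]

/-- The pairing as a linear map in the polynomial. -/
noncomputable def pairL {n : ℕ} (w : (Fin n →₀ ℕ) → ℝ) : RPoly n →ₗ[ℝ] ℝ where
  toFun p := pairing p w
  map_add' p q := by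
    classical
    rw [pairing_eq_sum (p + q) w (p.support ∪ q.support) support_add,
      pairing_eq_sum p w (p.support ∪ q.support) Finset.subset_union_left,
      pairing_eq_sum q w (p.support ∪ q.support) Finset.subset_union_right,
      ← Finset.sum_add_distrib]
    exact Finset.sum_congr rfl fun α _ => by rw [coeff_add, add_mul]
  map_smul' r p := by
    rw [pairing_eq_sum (r • p) w p.support support_smul,
      pairing_eq_sum p w p.support subset_rfl, RingHom.id_apply, smul_eq_mul, Finset.mul_sum]
    exact Finset.sum_congr rfl fun α _ => by rw [coeff_smul, smul_eq_mul, mul_assoc]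

theorem pairL_apply {n : ℕ} (w : (Fin n →₀ ℕ) → ℝ) (p : RPoly n) : pairL w p = pairing p w := rfl

theorem pairL_monomial {n : ℕ} (w : (Fin n →₀ ℕ) → ℝ) (α : Fin n →₀ ℕ) :
    pairL w (monomial α 1) = w α := by
  classical
  rw [pairL_apply, pairing_eq_sum _ w {α} support_monomial_subset]
  simp

theorem pairL_C_mul {n : ℕ} (w : (Fin n →₀ ℕ) → ℝ) (r : ℝ) (p : RPoly n) :
    pairL w (C r * p) = r * pairL w p := by
  rw [← smul_eq_C_mul, map_smul, smul_eq_mul]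

/-- The quadratic module `Ideal(c_eq) + QM(c_in)` as an inductive predicate. -/
inductive QMp {n : ℕ} (E I : Finset ℕ) (c : ℕ → RPoly n) : RPoly n → Prop
  | isq (p : RPoly n) : QMp E I c (p ^ 2)
  | ineq (j : ℕ) (hj : j ∈ I) (p : RPoly n) : QMp E I c (c j * p ^ 2)
  | ieq (j : ℕ) (hj : j ∈ E) (p : RPoly n) : QMp E I c (c j * p)
  | iadd (p q : RPoly n) (hp : QMp E I c p) (hq : QMp E I c q) : QMp E I c (p + q)

variable {n : ℕ} {E I : Finset ℕ} {c : ℕ → RPoly n}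

theorem QMp.zero : QMp E I c 0 := by
  have := QMp.isq (E := E) (I := I) (c := c) 0
  rwa [zero_pow two_ne_zero] at this

theorem QMp.sum {ι : Type} (T : Finset ι) (g : ι → RPoly n) (h : ∀ i ∈ T, QMp E I c (g i)) :
    QMp E I c (∑ i ∈ T, g i) := by
  classical
  induction T using Finset.induction_on with
  | empty => simpa using QMp.zero
  | insert a s ha ih =>
    rw [Finset.sum_insert ha]
    exact QMp.iadd _ _ (h a (Finset.mem_insert_self _ _))
      (ih fun i hi => h i (Finset.mem_insert_of_mem hi))

theorem QMp.mulsq (p q : RPoly n) (h : QMp E I c q) : QMp E I c (p ^ 2 * q) := by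
  induction h with
  | isq r => rw [← mul_pow]; exact QMp.isq _
  | ineq j hj r =>
    have := QMp.ineq (E := E) (I := I) (c := c) j hj (p * r)
    convert this using 1; ring
  | ieq j hj r =>
    have := QMp.ieq (E := E) (I := I) (c := c) j hj (p ^ 2 * r)
    convert this using 1; ring
  | iadd a b _ _ ha hb => rw [mul_add]; exact QMp.iadd _ _ ha hb

theorem QMp.of_sos {p : RPoly n} (h : IsSOS p) : QMp E I c p := by
  obtain ⟨L, rfl⟩ := h
  induction L with
  | nil => simpa using QMp.zero
  | cons a L ih => simp only [List.map_cons, List.sum_cons]; exact QMp.iadd _ _ (QMp.isq a) ih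

theorem QMp.mul_sos {p : RPoly n} (h : IsSOS p) (j : ℕ) (hj : j ∈ I) : QMp E I c (c j * p) := by
  obtain ⟨L, rfl⟩ := h
  induction L with
  | nil => simpa using QMp.zero
  | cons a L ih =>
    simp only [List.map_cons, List.sum_cons, mul_add]; exact QMp.iadd _ _ (QMp.ineq j hj a) ih

theorem QMp.of_ideal {p : RPoly n} (h : p ∈ IdealFull E c) : QMp E I c p := by
  have key : ∀ r : RPoly n, QMp E I c (r * p) := by
    have h' : p ∈ Ideal.span (c '' (E : Set ℕ)) := h
    induction h' using Submodule.span_induction with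
    | mem y hy =>
      obtain ⟨j, hj, rfl⟩ := hy
      intro r; rw [mul_comm]; exact QMp.ieq j hj r
    | zero => intro r; rw [mul_zero]; exact QMp.zero
    | add y z hy hz hy' hz' =>
      intro r; rw [mul_add]; exact QMp.iadd _ _ (hy' hy r) (hz' hz r)
    | smul a y hy hy' =>
      intro r
      have := hy' hy (r * a)
      rwa [smul_eq_mul, ← mul_assoc]
  simpa using key 1

theorem QMp.isQM (h : ArchimedeanQM E I c) : ∃ R, IsQM (QMp E I c) R := by
  obtain ⟨R, hR, p1, hp1, p2, ⟨σ0, σ, h0, hσ, rfl⟩, heq⟩ := h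
  refine ⟨R, ⟨QMp.iadd, QMp.isq, QMp.mulsq, hR, ?_⟩⟩
  rw [heq]
  exact QMp.iadd _ _ (QMp.of_ideal hp1) (QMp.iadd _ _ (QMp.of_sos h0)
    (QMp.sum _ _ fun j hj => QMp.mul_sos (hσ j hj) j hj))

theorem QMp.eval_nonneg {q : RPoly n} (h : QMp E I c q) {x : Fin n → ℝ} (hx : x ∈ Kset E I c) :
    0 ≤ eval x q := by
  induction h with
  | isq r => rw [map_pow]; positivity
  | ineq j hj r => rw [map_mul, map_pow]; exact mul_nonneg (hx.2 j hj) (sq_nonneg _)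
  | ieq j hj r => rw [map_mul, hx.1 j hj, zero_mul]
  | iadd a b _ _ ha hb => rw [map_add]; exact add_nonneg ha hb

theorem QMp.mem_K {x : Fin n → ℝ} (h : ∀ q, QMp E I c q → 0 ≤ eval x q) : x ∈ Kset E I c := by
  refine ⟨fun j hj => ?_, fun j hj => ?_⟩
  · have h1 := h _ (QMp.ieq j hj 1)
    have h2 := h _ (QMp.ieq j hj (-1))
    simp at h1 h2
    linarith
  · have h1 := h _ (QMp.ineq j hj 1)
    simpa using h1

theorem QMp.pairing_nonneg {q : RPoly n} (h : QMp E I c q) :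
    ∃ k0, ∀ k ≥ k0, ∀ w, MomRelaxPSD E c I c k w → 0 ≤ pairL w q := by
  induction h with
  | isq p => exact ⟨p.totalDegree, fun k hk w hw => hw.2.2 p hk⟩
  | ineq j hj p => exact ⟨p.totalDegree + ((c j).totalDegree + 1) / 2, fun k hk w hw =>
      hw.2.1 j hj p hk⟩
  | ieq j hj p => exact ⟨p.totalDegree + (c j).totalDegree, fun k hk w hw =>
      (hw.1 j hj p (by omega)).ge⟩
  | iadd a b _ _ ha hb =>
    obtain ⟨k1, h1⟩ := ha
    obtain ⟨k2, h2⟩ := hb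
    refine ⟨max k1 k2, fun k hk w hw => ?_⟩
    rw [map_add]
    exact add_nonneg (h1 k (le_trans (le_max_left _ _) hk) w hw)
      (h2 k (le_trans (le_max_right _ _) hk) w hw)

theorem K_compact (h : ArchimedeanQM E I c) : IsCompact (Kset E I c) := by
  obtain ⟨R, hR⟩ := QMp.isQM h
  refine (isCompact_univ_pi (fun _ : Fin n =>
    isCompact_Icc (a := -(R + 1)) (b := R + 1))).of_isClosed_subset ?_ ?_
  · have : Kset E I c = (⋂ j ∈ E, {x | eval x (c j) = 0}) ∩ ⋂ j ∈ I, {x | 0 ≤ eval x (c j)} := by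
      ext x; simp [Kset]
    rw [this]
    exact (isClosed_biInter fun j _ => isClosed_eq (MvPolynomial.continuous_eval _)
      continuous_const).inter (isClosed_biInter fun j _ =>
        isClosed_le continuous_const (MvPolynomial.continuous_eval _))
  · intro x hx i _
    have h1 := QMp.eval_nonneg hR.arch hx
    simp only [map_sub, eval_C, map_sum, map_pow, eval_X] at h1
    have h2 : x i ^ 2 ≤ ∑ a, x a ^ 2 :=
      Finset.single_le_sum (f := fun a => x a ^ 2) (fun a _ => sq_nonneg _) (Finset.mem_univ i)
    have := hR.pos
    constructor <;> nlinarith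

theorem point_moment {u : Fin n → ℝ} (hu : u ∈ Kset E I c) :
    ∃ w : (Fin n →₀ ℕ) → ℝ, w 0 = 1 ∧ (∀ k, MomRelaxPSD E c I c k w) ∧
      ∀ p, pairing p w = eval u p := by
  have key : ∀ p : RPoly n, pairing p (fun α => ∏ i, u i ^ α i) = eval u p := fun p => by
    rw [eval_eq']; rfl
  refine ⟨fun α => ∏ i, u i ^ α i, by simp, fun k => ⟨?_, ?_, ?_⟩, key⟩
  · intro j hj p _
    rw [key, map_mul, hu.1 j hj, zero_mul]
  · intro j hj p _
    rw [key, map_mul, map_pow]; exact mul_nonneg (hu.2 j hj) (sq_nonneg _)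
  · intro p _
    rw [key, map_pow]; positivity

theorem vanish_cert (f : RPoly n) (hK : (Kset E I c).Nonempty) (harch : ArchimedeanQM E I c)
    (hopt : ∀ u : Fin n → ℝ,
      (u ∈ Kset E I c ∧ ∀ x ∈ Kset E I c, eval u f ≤ eval x f) → OptCondsAt E c I c f u) :
    ∃ S : Finset (Fin n → ℝ), ∀ p : RPoly n, (∀ u ∈ S, eval u p = 0) →
      ∃ k0 : ℕ, ∀ k ≥ k0, ∀ w : (Fin n →₀ ℕ) → ℝ, w 0 = 1 → MomRelaxPSD E c I c k w →
        (∀ w' : (Fin n →₀ ℕ) → ℝ, (w' 0 = 1 ∧ MomRelaxPSD E c I c k w') →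
          pairing f w ≤ pairing f w') → pairL w (p ^ 2) ≤ 0 := by
  classical
  have hc := K_compact harch
  have hloc : ∀ u, (u ∈ Kset E I c ∧ ∀ x ∈ Kset E I c, eval u f ≤ eval x f) → _ := fun u hu =>
    local_cert E I c f u hu.1 (hopt u hu)
  have hfin := min_finite E I c f hc (fun u hu => by
    obtain ⟨s, φ, _, h⟩ := hloc u hu
    exact ⟨s, φ, h⟩)
  obtain ⟨u0, hu0, hmin⟩ := hc.exists_isMinOn hK (MvPolynomial.continuous_eval f).continuousOn
  have hmin' : ∀ x ∈ Kset E I c, eval u0 f ≤ eval x f := fun x hx => hmin hx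
  set S := hfin.toFinset with hSdef
  have hSmem : ∀ u, u ∈ S ↔ (u ∈ Kset E I c ∧ ∀ x ∈ Kset E I c, eval u f ≤ eval x f) := fun u => by
    rw [hSdef, Set.Finite.mem_toFinset]; rfl
  obtain ⟨s, φ, hL, hpos⟩ := global_cert E I c f hc S (eval u0 f)
    (fun u hu => ((hSmem u).1 hu).1)
    (fun u hu => le_antisymm (((hSmem u).1 hu).2 u0 hu0) (hmin' u ((hSmem u).1 hu).1))
    (fun x hx hxS => by
      by_contra hcon
      exact hxS ((hSmem x).2 ⟨hx, fun y hy => (not_lt.1 hcon).trans (hmin' y hy)⟩))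
    (fun u hu => hloc u ((hSmem u).1 hu))
  obtain ⟨R, hR⟩ := QMp.isQM harch
  refine ⟨S, fun p hp => ?_⟩
  obtain ⟨ε, hε, hcert⟩ := main_cert hR S _ hL
    (fun x hx hq => hpos x (QMp.mem_K hq) hx) p hp
  have h2 := QMp.iadd _ _ (QMp.iadd _ _ hcert
    (QMp.sum I (fun j => c j * s j ^ 2) fun j hj => QMp.ineq j hj _))
    (QMp.sum E (fun j => c j * φ j) fun j hj => QMp.ieq j hj _)
  obtain ⟨k0, hk0⟩ := h2.pairing_nonneg
  refine ⟨k0, fun k hk w hw0 hw hwmin => ?_⟩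
  have h3 := hk0 k hk w hw
  have e : f - C (eval u0 f) - ∑ j ∈ I, c j * s j ^ 2 - ∑ j ∈ E, c j * φ j - C ε * p ^ 2
      + ∑ j ∈ I, c j * s j ^ 2 + ∑ j ∈ E, c j * φ j
      = f - C (eval u0 f) * monomial 0 1 - C ε * p ^ 2 := by
    rw [show (monomial 0 1 : RPoly n) = 1 from rfl]; ring
  rw [e, map_sub, map_sub, pairL_C_mul, pairL_C_mul, pairL_monomial, hw0] at h3
  obtain ⟨w', hw'0, hw'1, hw'2⟩ := point_moment hu0
  have h4 := hwmin w' ⟨hw'0, hw'1 k⟩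
  rw [hw'2, ← pairL_apply] at h4
  have h5 : ε * pairL w (p ^ 2) ≤ 0 := by linarith
  by_contra hcon
  push Not at hcon
  have := mul_pos hε hcon
  linarith

theorem pair_zero (k : ℕ) (w : (Fin n →₀ ℕ) → ℝ) (hw : MomRelaxPSD E c I c k w) (p q : RPoly n)
    (hp : p.totalDegree ≤ k) (hq : q.totalDegree ≤ k) (h0 : pairL w (p ^ 2) ≤ 0) :
    pairL w (p * q) = 0 := by
  have key : ∀ t : ℝ, 0 ≤ 2 * t * pairL w (p * q) + pairL w (q ^ 2) := by
    intro t
    have hd : (C t * p + q).totalDegree ≤ k := by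
      refine (totalDegree_add _ _).trans (max_le ?_ hq)
      refine (totalDegree_mul _ _).trans ?_
      rw [totalDegree_C, zero_add]; exact hp
    have h1 : 0 ≤ pairL w ((C t * p + q) ^ 2) := hw.2.2 _ hd
    have e : (C t * p + q) ^ 2 = C (t ^ 2) * p ^ 2 + C (2 * t) * (p * q) + q ^ 2 := by
      have : (C 2 : RPoly n) = 2 := map_ofNat C 2
      rw [C_mul, this, C_pow]; ring
    rw [e, map_add, map_add, pairL_C_mul, pairL_C_mul] at h1
    have := mul_nonpos_of_nonneg_of_nonpos (sq_nonneg t) h0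
    linarith
  by_contra hne
  have h := key (-(pairL w (q ^ 2) + 1) / (2 * pairL w (p * q)))
  have e : 2 * (-(pairL w (q ^ 2) + 1) / (2 * pairL w (p * q))) * pairL w (p * q)
      = -(pairL w (q ^ 2) + 1) := by field_simp
  rw [e] at h
  linarith

theorem mdeg_eq (α : Fin n →₀ ℕ) : (α.sum fun _ e => e) = mdeg α := by
  rw [mdeg, Finsupp.sum_fintype _ _ (fun _ => rfl)]

theorem expand (t : ℕ) (p : RPoly n) (hp : p.totalDegree ≤ t) :
    p = ∑ γ : {α : Fin n →₀ ℕ // mdeg α ≤ t}, C (p.coeff γ.1) * monomial γ.1 1 := by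
  classical
  ext α
  rw [coeff_sum]
  simp only [coeff_C_mul, coeff_monomial, mul_ite, mul_one, mul_zero]
  by_cases h : mdeg α ≤ t
  · rw [Finset.sum_eq_single (⟨α, h⟩ : {α : Fin n →₀ ℕ // mdeg α ≤ t})]
    · simp
    · intro b _ hb
      rw [if_neg]; intro hb'; exact hb (Subtype.ext hb')
    · simp
  · rw [Finset.sum_eq_zero]
    · by_contra hne
      have h1 := le_totalDegree (mem_support_iff.2 hne)
      rw [mdeg_eq] at h1
      omega
    · intro b _
      rw [if_neg]; rintro rfl; exact h b.2

theorem pairL_mul_expand (t : ℕ) (w : (Fin n →₀ ℕ) → ℝ) (p q : RPoly n) (hp : p.totalDegree ≤ t)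
    (hq : q.totalDegree ≤ t) :
    pairL w (p * q) = ∑ γ, ∑ δ, p.coeff γ.1 * (momentMatrix t w γ δ * q.coeff δ.1) := by
  conv_lhs => rw [expand t p hp, expand t q hq, Finset.sum_mul_sum]
  simp only [map_sum]
  refine Finset.sum_congr rfl fun γ _ => Finset.sum_congr rfl fun δ _ => ?_
  have : C (coeff γ.1 p) * monomial γ.1 1 * (C (coeff δ.1 q) * monomial δ.1 1)
      = C (coeff γ.1 p * coeff δ.1 q) * (monomial (γ.1 + δ.1) 1 : RPoly n) := by
    have : (monomial (γ.1 + δ.1) 1 : RPoly n) = monomial γ.1 1 * monomial δ.1 1 := by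
      rw [monomial_mul, one_mul]
    rw [this, C_mul]; ring
  rw [this, pairL_C_mul, pairL_monomial, momentMatrix]
  ring

theorem rank_mono (s t : ℕ) (hst : s ≤ t) (w : (Fin n →₀ ℕ) → ℝ) :
    (momentMatrix s w).rank ≤ (momentMatrix t w).rank := by
  let r : {α : Fin n →₀ ℕ // mdeg α ≤ s} → {α : Fin n →₀ ℕ // mdeg α ≤ t} :=
    fun a => ⟨a.1, a.2.trans hst⟩
  have : momentMatrix s w = (momentMatrix t w).submatrix r r := rfl
  rw [this]
  exact Matrix.rank_submatrix_le _ _ _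

theorem rank_le_of_lagrange (s t k : ℕ) (htk : t ≤ k) (hst : s ≤ t) (w : (Fin n →₀ ℕ) → ℝ)
    (hw : MomRelaxPSD E c I c k w) (S : Finset (Fin n → ℝ)) (L : (Fin n → ℝ) → RPoly n)
    (hL : ∀ u ∈ S, (L u).totalDegree ≤ s)
    (h0 : ∀ α : {α : Fin n →₀ ℕ // mdeg α ≤ t}, pairL w
      ((monomial α.1 1 - ∑ u ∈ S, C (eval u (monomial α.1 1)) * L u) ^ 2) ≤ 0) :
    (momentMatrix t w).rank ≤ (momentMatrix s w).rank := by
  classical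
  have hmon : ∀ α : {α : Fin n →₀ ℕ // mdeg α ≤ t}, (monomial α.1 1 : RPoly n).totalDegree ≤ t :=
    fun α => by rw [totalDegree_monomial _ one_ne_zero, mdeg_eq]; exact α.2
  have hpd : ∀ α : {α : Fin n →₀ ℕ // mdeg α ≤ t}, (monomial α.1 1
      - ∑ u ∈ S, C (eval u (monomial α.1 1)) * L u : RPoly n).totalDegree ≤ k := by
    intro α
    refine (totalDegree_sub _ _).trans (max_le ((hmon α).trans htk) ?_)
    refine totalDegree_finsetSum_le fun u hu => ?_
    refine (totalDegree_mul _ _).trans ?_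
    rw [totalDegree_C, zero_add]
    exact (hL u hu).trans (hst.trans htk)
  have hz : ∀ (α : {α : Fin n →₀ ℕ // mdeg α ≤ t}) (q : RPoly n), q.totalDegree ≤ k → pairL w (monomial α.1 1 * q)
      = ∑ u ∈ S, eval u (monomial α.1 1) * pairL w (L u * q) := by
    intro α q hq
    have := pair_zero k w hw _ q (hpd α) hq (h0 α)
    rw [sub_mul, map_sub, sub_eq_zero] at this
    rw [this, Finset.sum_mul, map_sum]
    exact Finset.sum_congr rfl fun u _ => by rw [mul_assoc, pairL_C_mul]
  let V : Matrix {α : Fin n →₀ ℕ // mdeg α ≤ t} S ℝ := fun α u => eval u.1 (monomial α.1 1)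
  let B : Matrix S {α : Fin n →₀ ℕ // mdeg α ≤ s} ℝ := fun u γ => (L u.1).coeff γ.1
  have hM : momentMatrix t w = V * (B * (momentMatrix s w * (B.transpose * V.transpose))) := by
    ext α β
    have e1 : momentMatrix t w α β = pairL w (monomial α.1 1 * monomial β.1 1) := by
      rw [monomial_mul, one_mul, pairL_monomial, momentMatrix]
    rw [e1, hz α _ ((hmon β).trans htk), ← Finset.sum_coe_sort, Matrix.mul_apply]
    refine Finset.sum_congr rfl fun u _ => ?_
    congr 1
    rw [mul_comm, hz β _ ((hL u.1 u.2).trans (hst.trans htk)), ← Finset.sum_coe_sort,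
      ← Matrix.mul_assoc, ← Matrix.mul_assoc, Matrix.mul_apply]
    refine Finset.sum_congr rfl fun v _ => ?_
    rw [mul_comm (L v.1), pairL_mul_expand s w _ _ (hL u.1 u.2) (hL v.1 v.2), mul_comm,
      Matrix.mul_assoc, Matrix.mul_apply]
    congr 1
    refine Finset.sum_congr rfl fun γ _ => ?_
    rw [Matrix.mul_apply, Finset.mul_sum]
    rfl
  rw [hM]
  refine (Matrix.rank_mul_le_right _ _).trans ((Matrix.rank_mul_le_right _ _).trans
    (Matrix.rank_mul_le_left _ _))

end


/-- Theorem 3.3: for polynomial optimization over a nonempty set `K`,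
under archimedeanness and the optimality conditions at every global minimizer of (POP),
every minimizer of the `k`th moment relaxation has a flat truncation for `k` large enough. -/
theorem statement_2
    (n : ℕ) (E I : Finset ℕ) (hEI : Disjoint E I) (c : ℕ → RPoly n) (f : RPoly n)
    (hK : (Kset E I c).Nonempty)
    -- archimedeanness of Ideal(c_eq) + QM(c_in)
    (harch : ArchimedeanQM E I c)
    -- LICQC, SCC, SOSC at every global minimizer of (POP)
    (hopt : ∀ u : Fin n → ℝ,
      (u ∈ Kset E I c ∧ ∀ x ∈ Kset E I c, eval u f ≤ eval x f) →
      OptCondsAt E c I c f u) :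
    ∃ k1 : ℕ, ∀ k : ℕ, k1 ≤ k →
      ∀ w : (Fin n →₀ ℕ) → ℝ,
        (w 0 = 1 ∧ MomRelaxPSD E c I c k w) →
        (∀ w' : (Fin n →₀ ℕ) → ℝ, (w' 0 = 1 ∧ MomRelaxPSD E c I c k w') →
          pairing f w ≤ pairing f w') →
        HasFlatTruncation (max ((f.totalDegree + 1) / 2) (dKOrig E I c))
          (dKOrig E I c) k w := by
  classical
  obtain ⟨S, hS⟩ := vanish_cert f hK harch hopt
  choose L hL1 hL0 using fun u => lagrange_exists u S
  set dK := dKOrig E I c with hdK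
  set d0 := max ((f.totalDegree + 1) / 2) dK with hd0
  set N := S.sup fun u => (L u).totalDegree with hN
  set t := max d0 (N + dK) with ht
  have hv : ∀ α : {α : Fin n →₀ ℕ // mdeg α ≤ t}, ∀ v ∈ S, eval v
      (monomial α.1 1 - ∑ u ∈ S, C (eval u (monomial α.1 1)) * L u) = 0 := by
    intro α v hv
    rw [map_sub, map_sum, Finset.sum_eq_single v]
    · rw [map_mul, eval_C, hL1, mul_one, sub_self]
    · intro u _ huv
      rw [map_mul, hL0 u v hv (Ne.symm huv), mul_zero]
    · intro h; exact absurd hv h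
  choose k0 hk0 using fun α => hS _ (hv α)
  refine ⟨max t (Finset.univ.sup k0), fun k hk w hw hmin => ⟨t, le_max_left _ _,
    (le_max_left _ _).trans hk, ?_⟩⟩
  have htk : t ≤ k := (le_max_left _ _).trans hk
  have hNs : N ≤ t - dK := by
    have : N + dK ≤ t := le_max_right _ _
    omega
  apply le_antisymm
  · exact rank_mono _ _ (Nat.sub_le _ _) w
  · refine rank_le_of_lagrange (t - dK) t k htk (Nat.sub_le _ _) w hw.2 S L
      (fun u hu => le_trans (Finset.le_sup (f := fun u => (L u).totalDegree) hu) hNs) fun α => ?_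
    refine hk0 α k ?_ w hw.1 hw.2 hmin
    exact (Finset.le_sup (f := k0) (Finset.mem_univ α)).trans ((le_max_right _ _).trans hk)
end

section
/- Suppose z = Σ_{t=1}^r λ̃_t·[(τ_t,v_t)]_d, where each λ̃_t ≥ 0, each (τ_t,v_t) ∈ K̃ with τ_t > 0, and z is feasible for (M̃). Put λ_t = λ̃_t·τ_t^d and u_t = v_t/τ_t for each t. Then each u_t ∈ K, the vector y = Σ_{t=1}^r λ_t·[u_t]_d is feasible for (M), and ⟨f̂,z⟩ = ⟨f,y⟩. Consequently, if in addition K is closed at infinity and z is a minimizer of (M̃), then y is a minimizer of (M). -/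
open MvPolynomial MeasureTheory

section helpers
open MvPolynomial MeasureTheory

lemma aux_mdeg_le {n : ℕ} (p : RPoly n) {ℓ : ℕ} (h : p.totalDegree ≤ ℓ) {α : Fin n →₀ ℕ}
    (hα : α ∈ p.support) : mdeg α ≤ ℓ := by
  refine le_trans ?_ ((le_totalDegree hα).trans h)
  rw [Finsupp.sum_fintype _ _ (fun _ => rfl)]
  exact le_rfl

lemma aux_eval {n : ℕ} (p : RPoly n) (x : Fin n → ℝ) :
    eval x p = ∑ α ∈ p.support, p.coeff α * ∏ i, x i ^ α i := by
  rw [eval_eq']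

lemma aux_eval_homog {n : ℕ} (p : RPoly n) (ℓ : ℕ) (h : p.totalDegree ≤ ℓ) (τ : ℝ) (hτ : τ ≠ 0)
    (v : Fin n → ℝ) :
    eval (Fin.cons τ v : Fin (n + 1) → ℝ) (homogAux ℓ p)
      = τ ^ ℓ * eval (fun i => v i / τ) p := by
  rw [homogAux, map_sum, aux_eval, Finset.mul_sum]
  refine Finset.sum_congr rfl fun α hα => ?_
  have hd := aux_mdeg_le p h hα
  rw [eval_monomial, Finsupp.prod_fintype _ _ (fun _ => pow_zero _), Fin.prod_univ_succ]
  have h0 : (Finsupp.mapDomain Fin.succ α : Fin (n + 1) →₀ ℕ) 0 = 0 :=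
    Finsupp.mapDomain_notin_range _ _ (by simp)
  have h1 : ∀ i : Fin n, (Finsupp.mapDomain Fin.succ α : Fin (n + 1) →₀ ℕ) i.succ = α i :=
    fun i => Finsupp.mapDomain_apply (Fin.succ_injective n) _ _
  simp only [Finsupp.add_apply, h0, h1, Fin.cons_zero, Fin.cons_succ, Finsupp.single_eq_same,
    add_zero]
  have h2 : ∀ i : Fin n, (Finsupp.single (0 : Fin (n + 1)) (ℓ - mdeg α)) i.succ = 0 := fun i => by
    simp
  simp only [h2, zero_add, div_pow, Finset.prod_div_distrib, Finset.prod_pow_eq_pow_sum]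
  have h3 : τ ^ ℓ = τ ^ (ℓ - mdeg α) * τ ^ (∑ i, α i) := by
    rw [← pow_add]; congr 1; unfold mdeg at *; omega
  rw [h3]
  field_simp

lemma aux_pairing_atoms {n r : ℕ} (p : RPoly n) (l : Fin r → ℝ) (x : Fin r → Fin n → ℝ) :
    pairing p (fun α => ∑ t, l t * ∏ i, x t i ^ α i) = ∑ t, l t * eval (x t) p := by
  simp only [pairing, aux_eval, Finset.mul_sum]
  rw [Finset.sum_comm]
  refine Finset.sum_congr rfl fun t _ => Finset.sum_congr rfl fun α _ => by ring

lemma aux_pairing_meas {n : ℕ} (p : RPoly n) (μ : Measure (Fin n → ℝ)) (y : (Fin n →₀ ℕ) → ℝ)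
    (h : ∀ α ∈ p.support, Integrable (fun x => ∏ i, x i ^ α i) μ ∧
      y α = ∫ x, (∏ i, x i ^ α i) ∂μ) :
    pairing p y = ∫ x, eval x p ∂μ := by
  simp only [pairing, aux_eval]
  rw [integral_finset_sum _ (fun α hα => (h α hα).1.const_mul _)]
  refine Finset.sum_congr rfl fun α hα => ?_
  rw [integral_const_mul, (h α hα).2]

lemma aux_atoms_cone {n r d : ℕ} (K : Set (Fin n → ℝ)) (l : Fin r → ℝ) (hl : ∀ t, 0 ≤ l t)
    (x : Fin r → Fin n → ℝ) (hx : ∀ t, x t ∈ K) :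
    InMomentCone d K (fun α => ∑ t, l t * ∏ i, x t i ^ α i) := by
  refine ⟨∑ t, ENNReal.ofReal (l t) • Measure.dirac (x t), ?_, ?_, fun α _ => ?_⟩
  · constructor
    simp [Measure.finsetSum_apply]
  · simp [Measure.finsetSum_apply, hx]
  · have hi : ∀ t ∈ Finset.univ, Integrable (fun x : Fin n → ℝ => ∏ i, x i ^ α i)
        (ENNReal.ofReal (l t) • Measure.dirac (x t)) := fun t _ =>
      (integrable_dirac (by simp)).smul_measure (by simp)
    refine ⟨integrable_finsetSum_measure.2 hi, ?_⟩
    rw [integral_finsetSum_measure hi]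
    refine Finset.sum_congr rfl fun t _ => ?_
    rw [integral_smul_measure, integral_dirac, ENNReal.toReal_ofReal (hl t), smul_eq_mul]

/-- the weight -/
noncomputable def auxS {n : ℕ} (x : Fin n → ℝ) : ℝ := Real.sqrt (1 + ∑ i, x i ^ 2)

/-- lifting to the sphere -/
noncomputable def auxPhi {n : ℕ} (x : Fin n → ℝ) : Fin (n + 1) → ℝ :=
  Fin.cons (1 / auxS x) (fun i => x i / auxS x)

lemma auxS_pos {n : ℕ} (x : Fin n → ℝ) : 0 < auxS x := by
  unfold auxS; positivity

lemma auxS_sq {n : ℕ} (x : Fin n → ℝ) : auxS x ^ 2 = 1 + ∑ i, x i ^ 2 := by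
  unfold auxS; exact Real.sq_sqrt (by positivity)

lemma auxS_cont {n : ℕ} : Continuous (auxS (n := n)) := by
  unfold auxS; fun_prop

lemma auxPhi_cont {n : ℕ} : Continuous (auxPhi (n := n)) := by
  refine continuous_pi fun i => ?_
  refine Fin.cases ?_ (fun j => ?_) i
  · simp only [auxPhi, Fin.cons_zero]
    exact continuous_const.div auxS_cont fun x => (auxS_pos x).ne'
  · simp only [auxPhi, Fin.cons_succ]
    exact (continuous_apply j).div auxS_cont fun x => (auxS_pos x).ne'

lemma auxPhi_sum {n : ℕ} (x : Fin n → ℝ) : ∑ i, auxPhi x i ^ 2 = 1 := by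
  rw [Fin.sum_univ_succ]
  simp only [auxPhi, Fin.cons_zero, Fin.cons_succ, div_pow, auxS_sq]
  rw [← Finset.sum_div, ← add_div, one_pow, div_self]
  positivity

lemma auxPhi_abs {n : ℕ} (x : Fin n → ℝ) (i : Fin (n + 1)) : |auxPhi x i| ≤ 1 := by
  rw [← sq_le_one_iff_abs_le_one, ← auxPhi_sum x]
  exact Finset.single_le_sum (f := fun i => auxPhi x i ^ 2) (fun j _ => sq_nonneg _)
    (Finset.mem_univ i)

lemma auxPhi_eval {n : ℕ} (x : Fin n → ℝ) (p : RPoly n) (ℓ : ℕ) (h : p.totalDegree ≤ ℓ) :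
    eval (auxPhi x) (homogAux ℓ p) = (1 / auxS x) ^ ℓ * eval x p := by
  have hs := (auxS_pos x).ne'
  rw [auxPhi, aux_eval_homog p ℓ h _ (by positivity [auxS_pos x])]
  congr 3
  ext i
  field_simp

lemma auxPhi_mem {n : ℕ} (E I : Finset ℕ) (c : ℕ → RPoly n) (x : Fin n → ℝ)
    (hx : x ∈ Kset E I c) : auxPhi x ∈ Khom E I c := by
  have hs := auxS_pos x
  refine ⟨fun j hj => ?_, fun j hj => ?_, auxPhi_sum x, ?_⟩
  · rw [homogenize, auxPhi_eval _ _ _ le_rfl, hx.1 j hj, mul_zero]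
  · rw [homogenize, auxPhi_eval _ _ _ le_rfl]
    exact mul_nonneg (by positivity) (hx.2 j hj)
  · simp only [auxPhi, Fin.cons_zero]; positivity

lemma aux_closed {n : ℕ} (E I : Finset ℕ) (c : ℕ → RPoly n) : IsClosed (Khom E I c) := by
  have : Khom E I c = (⋂ j ∈ E, {x | eval x (homogenize (c j)) = 0}) ∩
      ((⋂ j ∈ I, {x | 0 ≤ eval x (homogenize (c j))}) ∩
        ({x | (∑ i, (x i) ^ 2) = 1} ∩ {x | 0 ≤ x 0})) := by
    ext x; simp [Khom]
  rw [this]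
  refine IsClosed.inter (isClosed_biInter fun j _ => ?_) (IsClosed.inter
    (isClosed_biInter fun j _ => ?_) (IsClosed.inter ?_ ?_))
  · exact isClosed_eq (MvPolynomial.continuous_eval _) continuous_const
  · exact isClosed_le continuous_const (MvPolynomial.continuous_eval _)
  · exact isClosed_eq (by fun_prop) continuous_const
  · exact isClosed_le continuous_const (by fun_prop)

lemma auxS_le {n : ℕ} (x : Fin n → ℝ) : auxS x ≤ 1 + ∑ i, |x i| := by
  have h0 : 0 ≤ ∑ i, |x i| := Finset.sum_nonneg fun i _ => abs_nonneg _
  refine Real.sqrt_le_iff.2 ⟨by positivity, ?_⟩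
  have : ∑ i, x i ^ 2 ≤ (∑ i, |x i|) ^ 2 := by
    have := Finset.sum_sq_le_sq_sum_of_nonneg (s := Finset.univ) (f := fun i => |x i|) 
      (fun i _ => abs_nonneg _)
    simpa using this
  nlinarith

lemma auxS_pow_le {n : ℕ} (x : Fin n → ℝ) (k : ℕ) :
    auxS x ^ (k + 1) ≤ (n + 1 : ℝ) ^ k * (1 + ∑ i, |x i ^ (k + 1)|) := by
  have h := pow_sum_le_card_mul_sum_pow (s := (Finset.univ : Finset (Fin (n + 1))))
    (f := (Fin.cons 1 (fun i => |x i|) : Fin (n + 1) → ℝ)) (fun i _ => by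
      refine Fin.cases ?_ (fun j => ?_) i <;> simp) k
  rw [Fin.sum_univ_succ, Fin.sum_univ_succ] at h
  simp only [Fin.cons_zero, Fin.cons_succ, Finset.card_univ, Fintype.card_fin, one_pow,
    ← abs_pow] at h
  push_cast at h
  exact (pow_le_pow_left₀ (auxS_pos x).le (auxS_le x) _).trans h

lemma auxS_int {n d : ℕ} (μ : Measure (Fin n → ℝ)) [IsFiniteMeasure μ]
    (h : ∀ α : Fin n →₀ ℕ, mdeg α ≤ d → Integrable (fun x => ∏ i, x i ^ α i) μ) :
    Integrable (fun x => auxS x ^ d) μ := by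
  rcases d with _ | k
  · simp
  have hi : ∀ i, Integrable (fun x : Fin n → ℝ => |x i ^ (k + 1)|) μ := fun i => by
    have := h (Finsupp.single i (k + 1)) (by
      rw [mdeg, Finset.sum_eq_single i] <;> simp +contextual [eq_comm])
    refine Integrable.abs (this.congr (Filter.Eventually.of_forall fun x => ?_))
    show ∏ j, x j ^ _ = _
    rw [Finset.prod_eq_single i] <;> simp +contextual [Finsupp.single_apply, eq_comm]
  have hg : Integrable (fun x : Fin n → ℝ => (n + 1 : ℝ) ^ k * (1 + ∑ i, |x i ^ (k + 1)|)) μ :=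
    ((integrable_const 1).add (integrable_finset_sum _ fun i _ => hi i)).const_mul _
  refine hg.mono' (auxS_cont.pow _).aestronglyMeasurable (Filter.Eventually.of_forall fun x => ?_)
  rw [Real.norm_of_nonneg (pow_nonneg (auxS_pos x).le _)]
  exact auxS_pow_le x k

lemma aux_lift {n d : ℕ} (E I : Finset ℕ) (c : ℕ → RPoly n) (y : (Fin n →₀ ℕ) → ℝ)
    (hy : InMomentCone d (Kset E I c) y) :
    ∃ z : (Fin (n + 1) →₀ ℕ) → ℝ, InMomentCone d (Khom E I c) z ∧
      ∀ p : RPoly n, p.totalDegree ≤ d → pairing (homogAux d p) z = pairing p y := by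
  obtain ⟨μ, hfin, hK, hmom⟩ := hy
  have hw := auxS_int μ fun α hα => (hmom α hα).1
  set ρ := μ.withDensity fun x => ENNReal.ofReal (auxS x ^ d) with hρ
  have hρfin : IsFiniteMeasure ρ := isFiniteMeasure_withDensity_ofReal hw.2
  have hm : Measurable (auxPhi (n := n)) := auxPhi_cont.measurable
  have hint : ∀ α : Fin (n + 1) →₀ ℕ, Integrable (fun x => ∏ i, x i ^ α i) (ρ.map auxPhi) := by
    intro α
    have hc : Continuous fun x : Fin (n + 1) → ℝ => ∏ i, x i ^ α i := by fun_prop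
    rw [integrable_map_measure hc.aestronglyMeasurable hm.aemeasurable]
    refine (integrable_const (1 : ℝ)).mono' (hc.comp auxPhi_cont).aestronglyMeasurable
      (Filter.Eventually.of_forall fun x => ?_)
    simp only [Function.comp, Real.norm_eq_abs, Finset.abs_prod, abs_pow]
    exact Finset.prod_le_one (fun i _ => by positivity)
      fun i _ => pow_le_one₀ (abs_nonneg _) (auxPhi_abs x i)
  refine ⟨fun α => ∫ x, ∏ i, x i ^ α i ∂(ρ.map auxPhi), ⟨ρ.map auxPhi, inferInstance, ?_,
    fun α _ => ⟨hint α, rfl⟩⟩, fun p hp => ?_⟩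
  · rw [Measure.map_apply hm (aux_closed E I c).measurableSet.compl]
    refine measure_mono_null ?_ (withDensity_absolutelyContinuous μ _ hK)
    intro x hx hx'
    exact hx (auxPhi_mem E I c x hx')
  · have hwm : Measurable fun x : Fin n → ℝ => ENNReal.ofReal (auxS x ^ d) :=
      (auxS_cont.pow d).measurable.ennreal_ofReal
    rw [aux_pairing_meas _ (ρ.map auxPhi) _ (fun α _ => ⟨hint α, rfl⟩),
      aux_pairing_meas p μ y (fun α hα => hmom α (aux_mdeg_le p hp hα)),
      integral_map hm.aemeasurable (MvPolynomial.continuous_eval _).aestronglyMeasurable, hρ,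
      integral_withDensity_eq_integral_toReal_smul
        hwm (by simp)]
    refine integral_congr_ae (Filter.Eventually.of_forall fun x => ?_)
    have hs := auxS_pos x
    simp only [auxPhi_eval x p d hp, smul_eq_mul]
    rw [ENNReal.toReal_ofReal (by positivity), ← mul_assoc, ← mul_pow, mul_one_div_cancel hs.ne', one_pow,
      one_mul]

end helpers

/-- Remark 4.2: dehomogenization of an atomic feasible point of (M̃)
gives a feasible point of (M) with the same objective value; if moreover `K` is
closed at infinity and `z` is a minimizer of (M̃), then `y` is a minimizer of (M). -/
theorem statement_5
    (n m m1 d : ℕ) (hm1 : m1 ≤ m)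
    (f : RPoly n) (a : Fin m → RPoly n) (b : Fin m → ℝ)
    (E I : Finset ℕ) (hEI : Disjoint E I) (c : ℕ → RPoly n)
    (hf : f.totalDegree ≤ d) (ha : ∀ i, (a i).totalDegree ≤ d)
    (r : ℕ) (lam : Fin r → ℝ) (τ : Fin r → ℝ) (v : Fin r → (Fin n → ℝ))
    (hlam : ∀ t, 0 ≤ lam t) (hτ : ∀ t, 0 < τ t)
    (hKt : ∀ t, (Fin.cons (τ t) (v t) : Fin (n + 1) → ℝ) ∈ Khom E I c)
    -- z = ∑_t λ̃_t [(τ_t, v_t)]_d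
    (z : (Fin (n + 1) →₀ ℕ) → ℝ)
    (hz : z = fun α : Fin (n + 1) →₀ ℕ =>
      ∑ t, lam t * ∏ i, (Fin.cons (τ t) (v t) : Fin (n + 1) → ℝ) i ^ α i)
    -- z is feasible for (M̃)
    (hzfeas : MFeas m1 d (fun i => homogAux d (a i)) b (Khom E I c) z)
    -- λ_t = λ̃_t τ_t^d, u_t = v_t / τ_t
    (u : Fin r → (Fin n → ℝ)) (hu : ∀ t, u t = fun i => v t i / τ t)
    -- y = ∑_t λ_t [u_t]_d
    (y : (Fin n →₀ ℕ) → ℝ)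
    (hy : y = fun α : Fin n →₀ ℕ =>
      ∑ t, (lam t * τ t ^ d) * ∏ i, u t i ^ α i) :
    (∀ t, u t ∈ Kset E I c) ∧
    MFeas m1 d a b (Kset E I c) y ∧
    pairing (homogAux d f) z = pairing f y ∧
    (ClosedAtInfinity E I c →
      (∀ z' : (Fin (n + 1) →₀ ℕ) → ℝ,
        MFeas m1 d (fun i => homogAux d (a i)) b (Khom E I c) z' →
        pairing (homogAux d f) z ≤ pairing (homogAux d f) z') →
      (∀ y' : (Fin n →₀ ℕ) → ℝ, MFeas m1 d a b (Kset E I c) y' →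
        pairing f y ≤ pairing f y')) := by
  have hev : ∀ (t : Fin r) (p : RPoly n) (ℓ : ℕ), p.totalDegree ≤ ℓ →
      eval (Fin.cons (τ t) (v t) : Fin (n + 1) → ℝ) (homogAux ℓ p) = τ t ^ ℓ * eval (u t) p :=
    fun t p ℓ h => by rw [aux_eval_homog p ℓ h _ (hτ t).ne', hu t]
  have huK : ∀ t, u t ∈ Kset E I c := by
    intro t
    have hp : ∀ k, 0 < τ t ^ k := fun k => pow_pos (hτ t) k
    refine ⟨fun j hj => ?_, fun j hj => ?_⟩
    · have := (hKt t).1 j hj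
      rw [homogenize, hev t _ _ le_rfl] at this
      exact (mul_eq_zero.1 this).resolve_left (hp _).ne'
    · have := (hKt t).2.1 j hj
      rw [homogenize, hev t _ _ le_rfl] at this
      exact nonneg_of_mul_nonneg_right this (hp _)
  have hpair : ∀ p : RPoly n, p.totalDegree ≤ d → pairing (homogAux d p) z = pairing p y := by
    intro p hp
    rw [hz, hy, aux_pairing_atoms, aux_pairing_atoms p]
    refine Finset.sum_congr rfl fun t _ => ?_
    rw [hev t p d hp, mul_assoc]
  refine ⟨huK, ⟨?_, fun i hi => ?_, fun i hi => ?_⟩, hpair f hf, fun _ hmin y' hy' => ?_⟩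
  · rw [hy]
    exact aux_atoms_cone _ _ (fun t => mul_nonneg (hlam t) (pow_nonneg (hτ t).le _)) _ huK
  · rw [← hpair _ (ha i)]; exact hzfeas.2.1 i hi
  · rw [← hpair _ (ha i)]; exact hzfeas.2.2 i hi
  · obtain ⟨z', hz', hp'⟩ := aux_lift E I c y' hy'.1
    rw [← hpair f hf, ← hp' f hf]
    refine hmin z' ⟨hz', fun i hi => ?_, fun i hi => ?_⟩
    · rw [hp' _ (ha i)]; exact hy'.2.1 i hi
    · rw [hp' _ (ha i)]; exact hy'.2.2 i hi
end
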